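/- Let p be an odd prime, n a positive integer, and let f ∈ F_{p^n}[X] have degree d with p not dividing d. If f is exceptional planar, then d is even. -/

import Mathlib

open Polynomial

/-- A function on a field of odd characteristic is planar if for every nonzero `ε`
the map `x ↦ f (x + ε) - f x` is a bijection. -/
def IsPlanarOdd {F : Type} [Field F] (f : F → F) : Prop :=
  ∀ ε : F, ε ≠ 0 → Function.Bijective (fun x : F => f (x + ε) - f x)

/-- A polynomial over a finite field `K` (of odd order) is exceptional planar if for
infinitely many positive integers `r` it induces a planar function on the extension
of `K` of degree `r`. -/
def IsExceptionalPlanarOdd {K : Type} [Field K] [Fintype K] (f : K[X]) : Prop :=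
  Set.Infinite {r : ℕ | 0 < r ∧ ∀ (L : Type) [Field L] [Fintype L] [Algebra K L],
      Fintype.card L = Fintype.card K ^ r →
      IsPlanarOdd (fun x : L => Polynomial.aeval x f)}

/-!
If `f` is exceptional planar, then `g = f(X + 1) - f` permutes `F_Q` for arbitrarily large `Q`, and
`deg g = d - 1` because `p ∤ d`. So it suffices that a polynomial over an algebraically closed field
`k` which permutes arbitrarily large `F_Q` has odd degree; extracting `p`-th roots and translating,
one may assume `g' ≠ 0` and `g(0) = 0`.

Let `E` be a splitting field of `g - T` over `k(T)`, let `S` be the set of roots, and consider the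
ring endomorphisms `ρ` of `E` that fix `T` and raise constants to the power `Q`; they permute `S`.

* For large `Q` each `ρ` fixes a root. Above the unramified `F_Q`-points of the `T`-line there are
  about `|G| Q` points of the curve, `G` being the Galois group, and at each of them some `ρ σ` with
  `σ ∈ G` is the Frobenius. The method of Bombieri and Stepanov bounds the number of points
  belonging to a given `σ` by about `(1 + 1/|G|) Q`, so the `σ ≠ 1` cannot account for all of them
  and `ρ` is the Frobenius at some point `ω`. There `T` takes the value `g(ξ)` with `ξ ∈ F_Q`, and
  the root that reduces to `ξ` at `ω` is fixed by `ρ`.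
* If `deg g = 2m`, some `ρ` fixes no root. At a point `φ` above `T = ∞` the ratios of the roots
  reduce to the `2m`-th roots of unity. Fix a root `y` and choose `ρ`, inducing the Frobenius at
  `φ`, such that `ρ y / y` reduces to some `θ` with `θ ^ m = -1`. If `ρ x = x`, the reduction `z` of
  `x / y` satisfies `z = z ^ Q * θ`; since `z ^ m = ±1` and `Q` is odd, the `m`-th powers of the two
  sides are opposite signs.
-/

open scoped IntermediateField.algebraAdjoinAdjoin

universe u

section Points

variable {k A B : Type*} [Field k] [CommRing A] [Algebra k A] [CommRing B] [Algebra k B]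

theorem exists_algHom_extending_of_isIntegral [IsAlgClosed k] [Algebra A B] [IsScalarTower k A B]
    [Algebra.IsIntegral A B] [FaithfulSMul A B] (ψ : A →ₐ[k] k) :
    ∃ φ : B →ₐ[k] k, ∀ a, φ (algebraMap A B a) = ψ a := by
  have := RingHom.ker_isMaximal_of_surjective ψ fun c => ⟨algebraMap k A c, ψ.commutes c⟩
  obtain ⟨I, _, hI⟩ := Ideal.exists_ideal_over_maximal_of_isIntegral (S := B) (RingHom.ker ψ) <| by
    simp [(RingHom.injective_iff_ker_eq_bot _).1 (FaithfulSMul.algebraMap_injective A B)]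
  let := Ideal.Quotient.field I
  have mk_algebraMap (a : A) :
      Ideal.Quotient.mk I (algebraMap A B a) = algebraMap k (B ⧸ I) (ψ a) := by
    have : a - algebraMap k A (ψ a) ∈ I.comap (algebraMap A B) := by simp [hI, RingHom.mem_ker]
    rwa [Ideal.mem_comap, map_sub, ← IsScalarTower.algebraMap_apply, ← Ideal.Quotient.eq] at this
  have : Algebra.IsIntegral k (B ⧸ I) := ⟨fun y => by
    obtain ⟨b, rfl⟩ := Ideal.Quotient.mk_surjective y
    obtain ⟨P, hP, hPb⟩ := Algebra.IsIntegral.isIntegral (R := A) b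
    refine ⟨P.map (ψ : A →+* k), hP.map _, ?_⟩
    rw [eval₂_map, ← map_zero (Ideal.Quotient.mk I), ← hPb, hom_eval₂]
    congr 1
    exact RingHom.ext fun a => (mk_algebraMap a).symm⟩
  let e : k ≃ₐ[k] B ⧸ I := AlgEquiv.ofBijective (Algebra.ofId k (B ⧸ I))
    IsAlgClosed.algebraMap_bijective_of_isIntegral
  refine ⟨(e.symm : B ⧸ I →ₐ[k] k).comp (Ideal.Quotient.mkₐ k I), fun a => ?_⟩
  rw [AlgHom.comp_apply, Ideal.Quotient.mkₐ_eq_mk, mk_algebraMap]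
  exact e.symm.commutes _

theorem algHom_eq_of_ker_le {φ ψ : B →ₐ[k] k} (h : RingHom.ker φ ≤ RingHom.ker ψ) : φ = ψ := by
  ext b
  have : b - algebraMap k B (φ b) ∈ RingHom.ker ψ := h (by simp [RingHom.mem_ker])
  simpa [RingHom.mem_ker, sub_eq_zero, eq_comm (a := ψ b)] using this

theorem exists_algHom_eq_comp_smul {G : Type*} [Group G] [Finite G] [MulSemiringAction G B]
    [SMulCommClass G k B] {φ ψ : B →ₐ[k] k}
    (h : ∀ b : B, (∀ g : G, g • b = b) → φ b = ψ b) :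
    ∃ g : G, ∀ b, φ b = ψ (g • b) := by
  have := RingHom.ker_isPrime φ
  have := RingHom.ker_isPrime ψ
  have : Algebra.IsInvariant (FixedPoints.subalgebra k B G) B G := ⟨fun b hb => ⟨⟨b, hb⟩, rfl⟩⟩
  obtain ⟨g, hg⟩ := Algebra.IsInvariant.exists_smul_of_under_eq (FixedPoints.subalgebra k B G) B G
    (RingHom.ker φ) (RingHom.ker ψ) <| by
      ext a
      exact iff_of_eq (congrArg (· = 0) (h a a.2))
  refine ⟨g, fun b => ?_⟩
  refine DFunLike.congr_fun (algHom_eq_of_ker_le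
    (ψ := ψ.comp (MulSemiringAction.toAlgHom k B g)) fun b hb => ?_) b
  have : g • b ∈ RingHom.ker ψ := hg ▸ Ideal.smul_mem_pointwise_smul_iff.2 hb
  simpa [RingHom.mem_ker] using this

theorem exists_algHom_interpolation {ι : Type*} [Finite ι] {ω : ι → B →ₐ[k] k}
    (hω : Function.Injective ω) (c : ι → k) : ∃ b, ∀ i, ω i b = c i := by
  have hmax (i : ι) : (RingHom.ker (ω i)).IsMaximal :=
    RingHom.ker_isMaximal_of_surjective _ fun c => ⟨algebraMap k B c, (ω i).commutes c⟩
  obtain ⟨b, hb⟩ := Ideal.exists_forall_sub_mem_ideal (I := fun i => RingHom.ker (ω i))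
    (fun i j hij => Ideal.isCoprime_of_isMaximal fun h => hij (hω (algHom_eq_of_ker_le h.le)))
    fun i => algebraMap k B (c i)
  exact ⟨b, fun i => by simpa [RingHom.mem_ker, sub_eq_zero] using hb i⟩

end Points

section Adjoin

variable {k E : Type*} [Field k] [Field E] [Algebra k E]

theorem exists_algHom_adjoin_singleton_of_transcendental {u : E} (hu : Transcendental k u) (τ : k) :
    ∃ ψ : Algebra.adjoin k {u} →ₐ[k] k, ψ ⟨u, Algebra.self_mem_adjoin_singleton k u⟩ = τ := by
  let e := AlgEquiv.ofInjective (aeval (R := k) u) (transcendental_iff_injective.1 hu)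
  have hle : Algebra.adjoin k {u} ≤ (aeval (R := k) u).range :=
    (Algebra.adjoin_singleton_eq_range_aeval k u).le
  refine ⟨((aeval τ).comp (e.symm : _ →ₐ[k] k[X])).comp (Subalgebra.inclusion hle), ?_⟩
  have : e.symm ⟨u, X, aeval_X u⟩ = X := e.symm_apply_eq.2 (Subtype.ext (aeval_X u).symm)
  exact (congrArg (aeval τ) this).trans (aeval_X τ)

theorem exists_isCoprime_mul_aeval_eq {u b : E} (hu : Transcendental k u)
    (hb : b ∈ IntermediateField.adjoin k {u}) :
    ∃ P R : k[X], IsCoprime P R ∧ b * aeval u R = aeval u P := by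
  classical
  obtain ⟨P, R, rfl⟩ := (IntermediateField.mem_adjoin_simple_iff k _).1 hb
  obtain rfl | hR := eq_or_ne R 0
  · exact ⟨0, 1, isCoprime_one_right, by simp⟩
  have hne {S : k[X]} (hS : S ≠ 0) : aeval u S ≠ 0 := fun h => hS (transcendental_iff.1 hu S h)
  obtain ⟨P', R', hP, hR', hunit⟩ := extract_gcd P R
  refine ⟨P', R', (gcd_isUnit_iff P' R').1 hunit, ?_⟩
  rw [div_mul_eq_mul_div, div_eq_iff (hne hR), ← map_mul, ← map_mul]
  congr 1
  linear_combination R' * hP - P' * hR'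

theorem algHom_eq_of_mem_adjoin_simple {B : Subalgebra k E} {u : B}
    (hu : Transcendental k (u : E)) {φ ψ : B →ₐ[k] k} (h : φ u = ψ u) {b : B}
    (hb : (b : E) ∈ IntermediateField.adjoin k {(u : E)}) : φ b = ψ b := by
  obtain ⟨P, R, ⟨α, β, hαβ⟩, hPR⟩ := exists_isCoprime_mul_aeval_eq hu hb
  have hval (ν : B →ₐ[k] k) : ν b * R.eval (ν u) = P.eval (ν u) := by
    have : b * aeval u R = aeval u P := Subtype.ext (by simpa using hPR)
    simpa [← aeval_algHom_apply] using congrArg ν this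
  have hR : R.eval (φ u) ≠ 0 := fun h0 => by
    simpa [← hval, h0] using congrArg (eval (φ u)) hαβ
  refine mul_right_cancel₀ hR ?_
  rw [hval, h, hval]

end Adjoin

section IntegralOver

variable {k E : Type*} [Field k] [Field E] [Algebra k E]

/-- The ring of functions integral over `k[u]`, i.e. regular wherever `u` is finite, as a
`k`-subalgebra of the function field `E`. -/
def integralOver (k : Type*) {E : Type*} [Field k] [Field E] [Algebra k E] (u : E) :
    Subalgebra k E :=
  (integralClosure (Algebra.adjoin k {u}) E).restrictScalars k

/-- A ring endomorphism of a `k`-algebra which acts on the constants as `c ↦ c ^ Q`: a lift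
to `E` of the `Q`-power Frobenius of `k`. -/
def IsFrobeniusSemilinear (k : Type*) {E : Type*} [Field k] [Field E] [Algebra k E] (Q : ℕ)
    (ρ : E →+* E) : Prop :=
  ∀ c : k, ρ (algebraMap k E c) = algebraMap k E (c ^ Q)

theorem IsFrobeniusSemilinear.comp_algHom {Q : ℕ} {ρ : E →+* E}
    (hρ : IsFrobeniusSemilinear k Q ρ) (σ : E →ₐ[k] E) :
    IsFrobeniusSemilinear k Q (ρ.comp (σ : E →+* E)) := fun c => by
  simp [hρ c]

theorem isFrobeniusSemilinear_algHom (σ : E →ₐ[k] E) :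
    IsFrobeniusSemilinear k 1 (σ : E →+* E) := fun c => by
  simp

theorem mem_integralOver_self (u : E) : u ∈ integralOver k u :=
  isIntegral_algebraMap (x := (⟨u, Algebra.self_mem_adjoin_singleton k u⟩ : Algebra.adjoin k {u}))

theorem isIntegrallyClosedIn_integralOver (u : E) :
    IsIntegrallyClosedIn (integralOver k u) E :=
  inferInstanceAs (IsIntegrallyClosedIn (integralClosure (Algebra.adjoin k {u}) E) E)

theorem mem_integralOver_of_isIntegral {u b : E} (hb : IsIntegral (integralOver k u) b) :
    b ∈ integralOver k u := by
  have := isIntegrallyClosedIn_integralOver (k := k) u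
  obtain ⟨c, rfl⟩ := IsIntegralClosure.isIntegral_iff (A := integralOver k u).1 hb
  exact c.2

theorem mem_integralOver_of_eval_eq_zero {u b : E} {P : E[X]} (hP : P.Monic)
    (hcoeff : ∀ i, P.coeff i ∈ integralOver k u) (hb : P.eval b = 0) : b ∈ integralOver k u := by
  have hlift : P ∈ lifts (algebraMap (integralOver k u) E) :=
    (lifts_iff_coeff_lifts P).2 fun i => ⟨⟨_, hcoeff i⟩, rfl⟩
  obtain ⟨R, rfl, -, hR⟩ := lifts_and_natDegree_eq_and_monic hlift hP
  exact mem_integralOver_of_isIntegral ⟨R, hR, by rwa [← eval_map]⟩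

theorem map_mem_integralOver {Q : ℕ} {ρ : E →+* E} (hρ : IsFrobeniusSemilinear k Q ρ) {u b : E}
    (hu : ρ u = u) (hb : b ∈ integralOver k u) : ρ b ∈ integralOver k u := by
  have hmaps (a : E) (ha : a ∈ Algebra.adjoin k {u}) : ρ a ∈ Algebra.adjoin k {u} := by
    induction ha using Algebra.adjoin_induction with
    | mem x hx => rw [Set.mem_singleton_iff.1 hx, hu]; exact Algebra.self_mem_adjoin_singleton k u
    | algebraMap c => rw [hρ]; exact Subalgebra.algebraMap_mem _ _
    | add x y _ _ hx hy => rw [map_add]; exact add_mem hx hy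
    | mul x y _ _ hx hy => rw [map_mul]; exact mul_mem hx hy
  exact hb.map_of_comp_eq (ρ.restrict (Algebra.adjoin k {u}) (Algebra.adjoin k {u}) hmaps) ρ rfl

theorem exists_point_of_transcendental [IsAlgClosed k] {u : E} (hu : Transcendental k u) (τ : k) :
    ∃ φ : integralOver k u →ₐ[k] k, φ ⟨u, mem_integralOver_self u⟩ = τ := by
  obtain ⟨ψ, hψ⟩ := exists_algHom_adjoin_singleton_of_transcendental hu τ
  let : Algebra (Algebra.adjoin k {u}) (integralOver k u) :=
    inferInstanceAs (Algebra _ (integralClosure (Algebra.adjoin k {u}) E))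
  have : IsScalarTower k (Algebra.adjoin k {u}) (integralOver k u) := .of_algebraMap_eq fun _ => rfl
  have : Algebra.IsIntegral (Algebra.adjoin k {u}) (integralOver k u) :=
    inferInstanceAs (Algebra.IsIntegral _ (integralClosure (Algebra.adjoin k {u}) E))
  have : FaithfulSMul (Algebra.adjoin k {u}) (integralOver k u) :=
    (faithfulSMul_iff_algebraMap_injective _ _).2 fun _ _ h =>
      Subtype.ext (congrArg (fun b : integralOver k u => (b : E)) h)
  obtain ⟨φ, hφ⟩ := exists_algHom_extending_of_isIntegral (B := integralOver k u) ψ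
  exact ⟨φ, (hφ _).trans hψ⟩

end IntegralOver

section Frobenius

variable {k E : Type*} [Field k] [Field E] [Algebra k E]

/-- `ρ` induces the `Q`-power Frobenius of the residue field at the point `φ` of `B`: reduction
at `φ` turns `ρ` into `c ↦ c ^ Q`. -/
def IsFrobeniusAt {B : Subalgebra k E} (Q : ℕ) (ρ : E →+* E) (φ : B →ₐ[k] k) : Prop :=
  ∀ b c : B, (c : E) = ρ b → φ c = φ b ^ Q

theorem exists_frobenius_twist (p s : ℕ) [ExpChar k p] [PerfectRing k p] {B : Subalgebra k E}
    {ρ : E →+* E} (hρ : IsFrobeniusSemilinear k (p ^ s) ρ) (hB : ∀ b ∈ B, ρ b ∈ B)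
    (φ : B →ₐ[k] k) : ∃ φ' : B →ₐ[k] k, ∀ b : B, φ' b ^ p ^ s = φ ⟨ρ b, hB b b.2⟩ := by
  let F := iterateFrobeniusEquiv k p s
  have F_symm_pow (a : k) : F.symm a ^ p ^ s = a := F.apply_symm_apply a
  let φ' : B →+* k := (F.symm : k →+* k).comp ((φ : B →+* k).comp (ρ.restrict B B hB))
  refine ⟨{ φ' with commutes' := fun c => ?_ }, fun b => F_symm_pow _⟩
  have : ρ.restrict B B hB (algebraMap k B c) = algebraMap k B (c ^ p ^ s) := Subtype.ext (hρ c)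
  change F.symm (φ (ρ.restrict B B hB (algebraMap k B c))) = c
  rw [this, φ.commutes]
  exact F.symm_apply_apply c

theorem exists_isFrobeniusAt (p s : ℕ) [ExpChar k p] [PerfectRing k p] {B : Subalgebra k E} {u : B}
    (hu : Transcendental k (u : E)) [FiniteDimensional (IntermediateField.adjoin k {(u : E)}) E]
    [IsGalois (IntermediateField.adjoin k {(u : E)}) E]
    (hG : ∀ σ : Gal(E/IntermediateField.adjoin k {(u : E)}), ∀ b ∈ B, σ b ∈ B)
    {ρ : E →+* E} (hρ : IsFrobeniusSemilinear k (p ^ s) ρ) (hB : ∀ b ∈ B, ρ b ∈ B)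
    (φ : B →ₐ[k] k) (hφ : φ ⟨ρ u, hB u u.2⟩ = φ u ^ p ^ s) :
    ∃ σ : Gal(E/IntermediateField.adjoin k {(u : E)}),
      IsFrobeniusAt (p ^ s) (ρ.comp (σ : E →+* E)) φ := by
  obtain ⟨φ', hφ'⟩ := exists_frobenius_twist p s hρ hB φ
  let : MulSemiringAction Gal(E/IntermediateField.adjoin k {(u : E)}) B :=
    { smul σ b := ⟨σ b, hG σ b b.2⟩
      one_smul _ := rfl
      mul_smul _ _ _ := rfl
      smul_zero σ := Subtype.ext (map_zero σ)
      smul_one σ := Subtype.ext (map_one σ)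
      smul_add σ a b := Subtype.ext (map_add σ (a : E) b)
      smul_mul σ a b := Subtype.ext (map_mul σ (a : E) b) }
  have : SMulCommClass Gal(E/IntermediateField.adjoin k {(u : E)}) k B :=
    ⟨fun σ c b => Subtype.ext ((σ.restrictScalars k).toLinearMap.map_smul c b)⟩
  obtain ⟨σ, hσ⟩ := exists_algHom_eq_comp_smul (φ := φ) (ψ := φ')
    (G := Gal(E/IntermediateField.adjoin k {(u : E)})) fun b hb =>
      algHom_eq_of_mem_adjoin_simple hu
        (iterateFrobenius_inj k p s ((hφ.symm.trans (hφ' u).symm))) <| by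
          obtain ⟨c, hc⟩ := (IsGalois.mem_bot_iff_fixed (b : E)).2 fun σ =>
            congrArg Subtype.val (hb σ)
          exact hc ▸ c.2
  refine ⟨σ, fun b c hc => ?_⟩
  rw [hσ b, hφ']
  exact congrArg φ (Subtype.ext hc)

end Frobenius

section PoleSpace

variable {k E : Type*} [Field k] [Field E] [Algebra k E] {T : E}

/-- The Riemann–Roch space `L(v · ∞)`: the functions regular wherever `T` is finite and with poles
of order at most `v`, measured by `T`, at the points above `T = ∞`. -/
def poleSpace (k : Type*) {E : Type*} [Field k] [Field E] [Algebra k E] (T : E) (v : ℕ) :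
    Submodule k (integralOver k T) :=
  (Subalgebra.toSubmodule (integralOver k T⁻¹)).comap
    (LinearMap.mulLeft k (T⁻¹ ^ v) ∘ₗ (integralOver k T).val.toLinearMap)

theorem mem_poleSpace {v : ℕ} {m : integralOver k T} :
    m ∈ poleSpace k T v ↔ T⁻¹ ^ v * (m : E) ∈ integralOver k T⁻¹ :=
  Iff.rfl

theorem inv_pow_mul_mem_integralOver {v w : ℕ} (hvw : v ≤ w) {m : E}
    (hm : T⁻¹ ^ v * m ∈ integralOver k T⁻¹) : T⁻¹ ^ w * m ∈ integralOver k T⁻¹ := by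
  rw [← Nat.sub_add_cancel hvw, pow_add, mul_assoc]
  exact mul_mem (pow_mem (mem_integralOver_self _) _) hm

theorem poleSpace_mono : Monotone (poleSpace k T) :=
  fun _ _ hvw _ hm => inv_pow_mul_mem_integralOver hvw hm

theorem mul_mem_poleSpace {v w : ℕ} {a b : integralOver k T} (ha : a ∈ poleSpace k T v)
    (hb : b ∈ poleSpace k T w) : a * b ∈ poleSpace k T (v + w) := by
  have := mul_mem (mem_poleSpace.1 ha) (mem_poleSpace.1 hb)
  rwa [mul_mul_mul_comm, ← pow_add] at this

theorem map_mem_poleSpace {Q v : ℕ} {ρ : E →+* E} (hρ : IsFrobeniusSemilinear k Q ρ)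
    (hT : ρ T = T) {a b : integralOver k T} (hb : (b : E) = ρ a) (ha : a ∈ poleSpace k T v) :
    b ∈ poleSpace k T v := by
  have hT' : ρ T⁻¹ = T⁻¹ := by rw [map_inv₀, hT]
  have := map_mem_integralOver hρ hT' (mem_poleSpace.1 ha)
  rwa [map_mul, map_pow, hT', ← hb] at this

theorem exists_inv_pow_mul_mem_of_mem_adjoin (hT : T ≠ 0) {a : E} (ha : a ∈ Algebra.adjoin k {T}) :
    ∃ v, T⁻¹ ^ v * a ∈ integralOver k T⁻¹ := by
  induction ha using Algebra.adjoin_induction with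
  | mem x hx =>
    rw [Set.mem_singleton_iff.1 hx]
    exact ⟨1, by simp [hT]⟩
  | algebraMap c => exact ⟨0, by simp⟩
  | add x y _ _ hx hy =>
    obtain ⟨⟨v, hv⟩, w, hw⟩ := hx, hy
    refine ⟨max v w, ?_⟩
    rw [mul_add]
    exact add_mem (inv_pow_mul_mem_integralOver (le_max_left v w) hv)
      (inv_pow_mul_mem_integralOver (le_max_right v w) hw)
  | mul x y _ _ hx hy =>
    obtain ⟨⟨v, hv⟩, w, hw⟩ := hx, hy
    exact ⟨v + w, by rw [pow_add, mul_mul_mul_comm]; exact mul_mem hv hw⟩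

theorem exists_mem_poleSpace (hT : T ≠ 0) (m : integralOver k T) : ∃ v, m ∈ poleSpace k T v := by
  obtain ⟨P, hP, hPm⟩ : IsIntegral (Algebra.adjoin k {T}) (m : E) := m.2
  choose v hv using fun i => exists_inv_pow_mul_mem_of_mem_adjoin hT (P.coeff i).2
  set R := P.map (algebraMap (Algebra.adjoin k {T}) E)
  have hR : R.Monic := hP.map _
  let w := (Finset.range R.natDegree).sup v
  refine ⟨w, mem_poleSpace.2 (mem_integralOver_of_eval_eq_zero
    (P := R.scaleRoots (T⁻¹ ^ w)) ((monic_scaleRoots_iff _).2 hR) (fun i => ?_) ?_)⟩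
  · rw [coeff_scaleRoots]
    obtain hi | rfl | hi := lt_trichotomy i R.natDegree
    · obtain ⟨j, hj⟩ := Nat.exists_eq_succ_of_ne_zero (Nat.sub_ne_zero_of_lt hi)
      rw [hj, pow_succ', ← mul_assoc, mul_comm (R.coeff i), coeff_map]
      exact mul_mem (inv_pow_mul_mem_integralOver (Finset.le_sup (Finset.mem_range.2 hi)) (hv i))
        (pow_mem (pow_mem (mem_integralOver_self _) _) _)
    · simp [hR.coeff_natDegree, one_mem]
    · simp [coeff_eq_zero_of_natDegree_lt hi]
  · exact scaleRoots_eval₂_eq_zero (RingHom.id E) (by rwa [eval₂_id, eval_map])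

theorem mem_valuationSubring_of_mem_integralOver {V : ValuationSubring E}
    (hV : ∀ c : k, algebraMap k E c ∈ V) {u : E} (hu : u ∈ V) {m : E}
    (hm : m ∈ integralOver k u) : m ∈ V := by
  have hle (a : E) (ha : a ∈ Algebra.adjoin k {u}) : a ∈ V :=
    Algebra.adjoin_induction (p := fun a _ => a ∈ V) (by simpa using hu) hV
      (fun _ _ _ _ => add_mem) (fun _ _ _ _ => mul_mem) ha
  have hint : IsIntegral V m :=
    IsIntegral.map_of_comp_eq (R := Algebra.adjoin k {u}) (T := V)
      ((RingHom.id E).restrict (Algebra.adjoin k {u}) V hle) (RingHom.id E) rfl hm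
  obtain ⟨a, rfl⟩ := IsIntegrallyClosed.isIntegral_iff.1 hint
  exact a.2

theorem mem_range_of_mem_integralOver [IsAlgClosed k] {m : E} (hm : m ∈ integralOver k T)
    (hm' : m ∈ integralOver k T⁻¹) : m ∈ (algebraMap k E).range := by
  have key :
      m ∈ (integralClosure (Subring.closure ((⊥ : Subalgebra k E) : Set E)) E).toSubring := by
    rw [← iInf_valuationSubring_superset, Subring.mem_iInf]
    rintro ⟨V, hV⟩
    have hV' (c : k) : algebraMap k E c ∈ V := hV (Subalgebra.algebraMap_mem ⊥ c)
    exact (V.mem_or_inv_mem T).elim (mem_valuationSubring_of_mem_integralOver hV' · hm)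
      (mem_valuationSubring_of_mem_integralOver hV' · hm')
  have hle : Subring.closure ((⊥ : Subalgebra k E) : Set E) ≤ (⊥ : Subalgebra k E).toSubring :=
    Subring.closure_le.2 subset_rfl
  have hint : IsIntegral (⊥ : Subalgebra k E) m :=
    IsIntegral.map_of_comp_eq (T := (⊥ : Subalgebra k E)) (Subring.inclusion hle) (RingHom.id E)
      rfl key
  exact (isIntegral_trans (R := k) m hint).mem_range_algebraMap_of_minpoly_splits
    (IsAlgClosed.splits _)

end PoleSpace

section Dimension

variable {k E : Type*} [Field k] [Field E] [Algebra k E]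

theorem ne_zero_of_transcendental {T : E} (hT : Transcendental k T) : T ≠ 0 :=
  fun h => hT (h ▸ isAlgebraic_zero)

theorem transcendental_inv {T : E} (hT : Transcendental k T) : Transcendental k T⁻¹ :=
  mt IsAlgebraic.inv_iff.1 hT

theorem adjoin_inv (T : E) : IntermediateField.adjoin k {T⁻¹} = IntermediateField.adjoin k {T} := by
  refine le_antisymm ?_ ?_ <;> rw [IntermediateField.adjoin_simple_le_iff]
  · exact inv_mem (IntermediateField.mem_adjoin_simple_self k T)
  · exact inv_mem_iff.1 (IntermediateField.mem_adjoin_simple_self k T⁻¹)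

theorem linearIndependent_pow_of_transcendental {A : Type*} [CommRing A] [Algebra k A] {T : A}
    (hT : Transcendental k T) : LinearIndependent k fun i : ℕ => T ^ i := by
  have := (basisMonomials k).linearIndependent.map' (aeval T).toLinearMap
    (LinearMap.ker_eq_bot.2 (transcendental_iff_injective.1 hT))
  simpa [Function.comp_def, aeval_monomial] using this

theorem X_pow_dvd_of_sum_aeval_mul_eq_zero {B ι : Type*} [CommRing B] [IsDomain B] [Algebra k B]
    [Fintype ι] {u : B} (hu : u ≠ 0) {b : ι → B}
    (hb : LinearIndependent k fun i => Ideal.Quotient.mk (Ideal.span {u}) (b i)) (n : ℕ)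
    (P : ι → k[X]) (hP : ∑ i, aeval u (P i) * b i = 0) (i : ι) : X ^ n ∣ P i := by
  induction n generalizing P with
  | zero => simp
  | succ n ih =>
    have hsplit (i : ι) :
        aeval u (P i) = u * aeval u (P i).divX + algebraMap k B ((P i).coeff 0) := by
      conv_lhs => rw [← X_mul_divX_add (P i), map_add, map_mul, aeval_X, aeval_C]
    have hcoeff : ∀ i, (P i).coeff 0 = 0 := by
      refine Fintype.linearIndependent_iff.1 hb _ ?_
      have := congrArg (Ideal.Quotient.mk (Ideal.span {u})) hP
      simpa [hsplit, Ideal.Quotient.eq_zero_iff_mem.2 (Ideal.mem_span_singleton_self u),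
        Algebra.smul_def] using this
    have hdivX : ∑ i, aeval u (P i).divX * b i = 0 := by
      refine mul_left_cancel₀ hu ?_
      rw [Finset.mul_sum, mul_zero, ← hP]
      simp [hsplit, hcoeff, mul_assoc]
    obtain ⟨R, hR⟩ := ih (fun i => (P i).divX) hdivX
    refine ⟨R, ?_⟩
    rw [← X_mul_divX_add (P i), hR, hcoeff, C_0]
    ring

theorem linearIndependent_adjoin_of_linearIndependent_quotient {ι : Type*} [Finite ι] {u : E}
    {B : Subalgebra k E} (hu : Transcendental k u) (huB : u ∈ B) {b : ι → B}
    (hb : LinearIndependent k fun i =>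
      Ideal.Quotient.mk (Ideal.span {(⟨u, huB⟩ : B)}) (b i)) :
    LinearIndependent (IntermediateField.adjoin k {u}) fun i => (b i : E) := by
  have := Fintype.ofFinite ι
  rw [← LinearIndependent.iff_fractionRing (Algebra.adjoin k {u}), Fintype.linearIndependent_iff]
  intro g hg i
  choose P hP using fun i => (Algebra.adjoin_singleton_eq_range_aeval k u).le (g i).2
  have hu0 : (⟨u, huB⟩ : B) ≠ 0 := fun h => ne_zero_of_transcendental hu (congrArg Subtype.val h)
  have hdvd := X_pow_dvd_of_sum_aeval_mul_eq_zero hu0 hb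
  have hPi : P i = 0 := by
    ext n
    refine X_pow_dvd_iff.1 (hdvd (n + 1) P (Subtype.ext ?_) i) n n.lt_succ_self
    simpa [Algebra.smul_def, ← show _ = _ from hP _] using hg
  exact Subtype.ext (by simpa [hPi] using (hP i).symm)

theorem rank_quotient_span_le_finrank {u : E} {B : Subalgebra k E} (hu : Transcendental k u)
    (huB : u ∈ B) [FiniteDimensional (IntermediateField.adjoin k {u}) E] :
    Module.rank k (B ⧸ Ideal.span {(⟨u, huB⟩ : B)}) ≤
      Module.finrank (IntermediateField.adjoin k {u}) E := by
  refine rank_le fun s hs => ?_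
  choose b hb using fun i : s => Ideal.Quotient.mk_surjective i.1
  rw [← Fintype.card_coe]
  exact (linearIndependent_adjoin_of_linearIndependent_quotient (b := b) hu huB
    (by simpa only [hb] using hs)).fintype_card_le_finrank

end Dimension

section PoleSpaceDimension

variable {k E : Type*} [Field k] [Field E] [Algebra k E] {T : E}

theorem rank_poleSpace_zero_le [IsAlgClosed k] : Module.rank k (poleSpace k T 0) ≤ 1 := by
  have : poleSpace k T 0 ≤ Submodule.span k {1} := fun m hm => by
    obtain ⟨c, hc⟩ := mem_range_of_mem_integralOver m.2 (by simpa using mem_poleSpace.1 hm)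
    exact Submodule.mem_span_singleton.2 ⟨c, Subtype.ext (by simp [← hc, Algebra.smul_def])⟩
  exact (Submodule.rank_mono this).trans ((rank_span_le _).trans (by simp))

theorem rank_poleSpace_succ_le (hT : Transcendental k T)
    [FiniteDimensional (IntermediateField.adjoin k {T}) E] (v : ℕ) :
    Module.rank k (poleSpace k T (v + 1)) ≤
      Module.finrank (IntermediateField.adjoin k {T}) E + Module.rank k (poleSpace k T v) := by
  have : FiniteDimensional (IntermediateField.adjoin k {T⁻¹}) E := by rwa [adjoin_inv]
  have hrank := rank_quotient_span_le_finrank (u := T⁻¹) (B := integralOver k T⁻¹)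
    (transcendental_inv hT) (mem_integralOver_self _)
  rw [adjoin_inv] at hrank
  let leading : poleSpace k T (v + 1) →ₗ[k]
      integralOver k T⁻¹ ⧸ Ideal.span {(⟨T⁻¹, mem_integralOver_self _⟩ : integralOver k T⁻¹)} :=
    (Ideal.Quotient.mkₐ k _).toLinearMap ∘ₗ
      ((LinearMap.mulLeft k (T⁻¹ ^ (v + 1)) ∘ₗ (integralOver k T).val.toLinearMap) ∘ₗ
        (poleSpace k T (v + 1)).subtype).codRestrict
          (Subalgebra.toSubmodule (integralOver k T⁻¹)) fun m => m.2
  have hker (m : LinearMap.ker leading) : (m.1.1 : integralOver k T) ∈ poleSpace k T v := by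
    obtain ⟨b, hb⟩ := Ideal.mem_span_singleton.1 (Ideal.Quotient.eq_zero_iff_mem.1 m.2)
    have hb' : T⁻¹ ^ (v + 1) * (m.1.1 : E) = T⁻¹ * b := congrArg Subtype.val hb
    rw [pow_succ', mul_assoc, mul_right_inj' (inv_ne_zero (ne_zero_of_transcendental hT))] at hb'
    exact mem_poleSpace.2 (hb' ▸ b.2)
  rw [← leading.rank_range_add_rank_ker]
  refine add_le_add ((Submodule.rank_le _).trans hrank) (LinearMap.rank_le_of_injective
    (((poleSpace k T (v + 1)).subtype ∘ₗ (LinearMap.ker leading).subtype).codRestrict _ hker) ?_)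
  exact fun a b h => Subtype.ext <| Subtype.ext <|
    congrArg (fun m : poleSpace k T v => (m : integralOver k T)) h

theorem rank_poleSpace_le [IsAlgClosed k] (hT : Transcendental k T)
    [FiniteDimensional (IntermediateField.adjoin k {T}) E] (v : ℕ) :
    Module.rank k (poleSpace k T v) ≤
      (Module.finrank (IntermediateField.adjoin k {T}) E * v + 1 : ℕ) := by
  induction v with
  | zero => simpa using rank_poleSpace_zero_le
  | succ v ih =>
    refine (rank_poleSpace_succ_le hT v).trans ((add_le_add_right ih _).trans_eq ?_)
    norm_cast
    ring

theorem finiteDimensional_poleSpace [IsAlgClosed k] (hT : Transcendental k T)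
    [FiniteDimensional (IntermediateField.adjoin k {T}) E] (v : ℕ) :
    FiniteDimensional k (poleSpace k T v) := by
  have := Module.Free.of_divisionRing k (poleSpace k T v)
  exact Module.rank_lt_aleph0_iff.1 ((rank_poleSpace_le hT v).trans_lt Cardinal.natCast_lt_aleph0)

theorem exists_le_finrank_poleSpace [IsAlgClosed k] (hT : Transcendental k T)
    [FiniteDimensional (IntermediateField.adjoin k {T}) E] :
    ∃ c, ∀ v, Module.finrank (IntermediateField.adjoin k {T}) E * v ≤
      Module.finrank k (poleSpace k T v) + c := by
  obtain ⟨s, b, hb⟩ := FiniteDimensional.exists_is_basis_integral (Algebra.adjoin k {T})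
    (IntermediateField.adjoin k {T}) E
  choose w hw using fun i =>
    exists_mem_poleSpace (ne_zero_of_transcendental hT) (⟨b i, hb i⟩ : integralOver k T)
  set D := Module.finrank (IntermediateField.adjoin k {T}) E
  have hD : Fintype.card s = D := (Module.finrank_eq_card_basis b).symm
  let c := Finset.univ.sup w
  refine ⟨D * c, fun v => ?_⟩
  have := finiteDimensional_poleSpace (k := k) hT v
  let family (x : Fin (v - c) × s) : integralOver k T :=
    ⟨T, mem_integralOver_self T⟩ ^ (x.1 : ℕ) * ⟨b x.2, hb x.2⟩
  have hmem (x : Fin (v - c) × s) : family x ∈ poleSpace k T v := by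
    have hpow : (⟨T, mem_integralOver_self T⟩ : integralOver k T) ^ (x.1 : ℕ) ∈
        poleSpace k T x.1 := by
      simp [mem_poleSpace, ne_zero_of_transcendental hT, one_mem]
    have hw' : w x.2 ≤ c := Finset.le_sup (Finset.mem_univ _)
    exact poleSpace_mono (by omega) (mul_mem_poleSpace hpow (hw x.2))
  have hgen : Transcendental k (IntermediateField.AdjoinSimple.gen k T) :=
    (transcendental_algebraMap_iff (algebraMap (IntermediateField.adjoin k {T}) E).injective).1 hT
  have hindep' : LinearIndependent k fun x : Fin (v - c) × s => T ^ (x.1 : ℕ) * b x.2 :=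
    linearIndependent_smul ((linearIndependent_pow_of_transcendental hgen).comp _
      Fin.val_injective) b.linearIndependent
  have hindep : LinearIndependent k fun x => (⟨family x, hmem x⟩ : poleSpace k T v) :=
    .of_comp ((integralOver k T).val.toLinearMap ∘ₗ (poleSpace k T v).subtype) hindep'
  have hcard := hindep.fintype_card_le_finrank
  rw [Fintype.card_prod, Fintype.card_fin, hD, mul_comm, Nat.mul_sub] at hcard
  omega

end PoleSpaceDimension

section InfinitelyDivisible

variable {k E : Type*} [Field k] [Field E] [Algebra k E] {T : E}

theorem mul_pow_mem_integralOver {u a c : E} {q j : ℕ} (hq : 0 < q) (hj : j ≤ q)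
    (ha : a ∈ integralOver k u) (hac : a * c ^ q ∈ integralOver k u) :
    a * c ^ j ∈ integralOver k u := by
  have hpow : (a * c ^ j) ^ q = a ^ (q - j) * (a * c ^ q) ^ j := by
    obtain ⟨i, rfl⟩ := Nat.exists_eq_add_of_le hj
    rw [Nat.add_sub_cancel_left]
    ring
  refine mem_integralOver_of_isIntegral (.of_pow hq ?_)
  rw [hpow]
  exact isIntegral_algebraMap
    (x := (⟨_, mul_mem (pow_mem ha _) (pow_mem hac _)⟩ : integralOver k u))

theorem exists_mul_mem_integralOver [FiniteDimensional (IntermediateField.adjoin k {T}) E]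
    (γ : E) : ∃ m : integralOver k T, m ≠ 0 ∧ (m : E) * γ ∈ integralOver k T := by
  have halg : IsAlgebraic (Algebra.adjoin k {T}) γ :=
    (IsFractionRing.isAlgebraic_iff (Algebra.adjoin k {T}) (IntermediateField.adjoin k {T}) E).2
      (Algebra.IsAlgebraic.isAlgebraic γ)
  obtain ⟨a, ha, hint⟩ := halg.exists_integral_multiple
  exact ⟨⟨a, isIntegral_algebraMap⟩, fun h => ha (Subtype.ext
    (congrArg (fun x : integralOver k T => (x : E)) h)), hint⟩

theorem isAlgebraic_of_pow_eq [IsAlgClosed k] (hT : Transcendental k T)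
    [FiniteDimensional (IntermediateField.adjoin k {T}) E] {m : integralOver k T} {w q : ℕ} {c : E}
    (hm0 : m ≠ 0) (hm : m ∈ poleSpace k T w) {m' : integralOver k T} (hm' : m' ∈ poleSpace k T w)
    (hc : (m' : E) = m * c ^ q) (hq : Module.finrank k (poleSpace k T w) ≤ q) (hq0 : 0 < q) :
    IsAlgebraic k c := by
  by_contra hctrans
  have hint (j : Fin (q + 1)) : (m : E) * c ^ (j : ℕ) ∈ integralOver k T :=
    mul_pow_mem_integralOver hq0 (Nat.le_of_lt_succ j.2) m.2 (hc ▸ m'.2)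
  have hpole (j : Fin (q + 1)) : ⟨_, hint j⟩ ∈ poleSpace k T w := by
    rw [mem_poleSpace, ← mul_assoc]
    exact mul_pow_mem_integralOver hq0 (Nat.le_of_lt_succ j.2) hm (mul_assoc _ _ (c ^ q) ▸ hc ▸ hm')
  have := finiteDimensional_poleSpace (k := k) hT w
  have hindep : LinearIndependent k fun j => (⟨_, hpole j⟩ : poleSpace k T w) :=
    .of_comp ((integralOver k T).val.toLinearMap ∘ₗ (poleSpace k T w).subtype) <|
      ((linearIndependent_pow_of_transcendental hctrans).comp _ Fin.val_injective).map'
        (LinearMap.mulLeft k (m : E)) (LinearMap.ker_eq_bot.2 (mul_right_injective₀ (by simpa)))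
  have := hindep.fintype_card_le_finrank
  rw [Fintype.card_fin] at this
  omega

theorem mem_range_of_frequently_exists_pow_eq [IsAlgClosed k] (hT : Transcendental k T)
    [FiniteDimensional (IntermediateField.adjoin k {T}) E] {γ : E}
    (hγ : ∃ᶠ q in Filter.atTop, ∃ c, c ^ q = γ) : γ ∈ (algebraMap k E).range := by
  obtain ⟨m, hm0, hmγ⟩ := exists_mul_mem_integralOver (k := k) (T := T) γ
  have hT0 := ne_zero_of_transcendental hT
  obtain ⟨⟨v, hv⟩, w, hw⟩ := exists_mem_poleSpace hT0 m, exists_mem_poleSpace hT0 ⟨_, hmγ⟩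
  obtain ⟨q, hq, c, rfl⟩ := Filter.frequently_atTop.1 hγ
    (Module.finrank k (poleSpace k T (max v w)) + 1)
  have hc := isAlgebraic_of_pow_eq hT hm0 (poleSpace_mono (le_max_left v w) hv)
    (poleSpace_mono (le_max_right v w) hw) rfl (by omega) (by omega)
  exact pow_mem (hc.isIntegral.mem_range_algebraMap_of_minpoly_splits (IsAlgClosed.splits _)) q

/-- The perfect core of `E` is `k`: an element with `p ^ e`-th roots for all `e` is constant. -/
def HasPerfectCore (k E : Type*) [Field k] [Field E] [Algebra k E] (p : ℕ) : Prop :=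
  ∀ γ : E, (∀ e, ∃ c, c ^ p ^ e = γ) → γ ∈ (algebraMap k E).range

theorem hasPerfectCore_of_transcendental [IsAlgClosed k] (hT : Transcendental k T)
    [FiniteDimensional (IntermediateField.adjoin k {T}) E] {p : ℕ} (hp : 1 < p) :
    HasPerfectCore k E p := fun _ hγ =>
  mem_range_of_frequently_exists_pow_eq hT <| Filter.frequently_atTop.2 fun n =>
    ⟨p ^ n, (Nat.lt_pow_self hp).le, hγ n⟩

theorem exists_pow_eq_of_le {p e₁ : ℕ} {γ : E} (h : ∀ e ≥ e₁, ∃ c, c ^ p ^ e = γ) (e : ℕ) :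
    ∃ c, c ^ p ^ e = γ := by
  obtain he | he := le_total e₁ e
  · exact h e he
  · obtain ⟨c, hc⟩ := h e₁ le_rfl
    exact ⟨c ^ p ^ (e₁ - e), by rw [← pow_mul, ← pow_add, Nat.sub_add_cancel he, hc]⟩

theorem HasPerfectCore.exists_sum_mul_pow_ne {p : ℕ} [ExpChar E p] (hcore : HasPerfectCore k E p)
    {m e₁ : ℕ} {β : Fin (m + 1) → E} (hβ : LinearIndependent k β)
    (he₁ : ∀ s : Fin m → E, ∑ j, β j.succ * s j ^ p ^ e₁ = 0 → s = 0) :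
    ∃ e ≥ e₁, ∀ s : Fin m → E, β 0 + ∑ j, β j.succ * s j ^ p ^ e ≠ 0 := by
  by_contra! hrel
  choose! s hs using hrel
  have hpow {e : ℕ} (he : e₁ ≤ e) (c : E) : (c ^ p ^ (e - e₁)) ^ p ^ e₁ = c ^ p ^ e := by
    rw [← pow_mul, ← pow_add, Nat.sub_add_cancel he]
  have hconst (e : ℕ) (he : e₁ ≤ e) (j : Fin m) : s e j ^ p ^ e = s e₁ j ^ p ^ e₁ := by
    have hdiff := he₁ (fun j => s e j ^ p ^ (e - e₁) - s e₁ j) <| by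
      simp only [sub_pow_expChar_pow, hpow he, mul_sub, Finset.sum_sub_distrib]
      linear_combination hs e he - hs e₁ le_rfl
    rw [← hpow he, sub_eq_zero.1 (congrFun hdiff j)]
  choose κ hκ using fun j => hcore (s e₁ j ^ p ^ e₁)
    (exists_pow_eq_of_le fun e he => ⟨s e j, hconst e he j⟩)
  have hzero := Fintype.linearIndependent_iff.1 hβ (Fin.cons 1 κ) (by
    simpa [Fin.sum_univ_succ, Algebra.smul_def, hκ, mul_comm] using hs e₁ le_rfl) 0
  exact one_ne_zero hzero

/-- Every finite `k`-linearly independent family of `A` is linearly independent over the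
`p ^ e`-th powers of `A` as soon as `e` is large. -/
def IsEventuallyFrobeniusIndependent (k A : Type*) [Field k] [CommRing A] [Algebra k A] (p : ℕ) :
    Prop :=
  ∀ (m : ℕ) (β : Fin m → A), LinearIndependent k β →
    ∃ e₀, ∀ e ≥ e₀, ∀ s : Fin m → A, ∑ j, β j * s j ^ p ^ e = 0 → s = 0

theorem HasPerfectCore.isEventuallyFrobeniusIndependent {p : ℕ} [ExpChar E p]
    (hcore : HasPerfectCore k E p) : IsEventuallyFrobeniusIndependent k E p := fun m β hβ => by
  induction m with
  | zero => exact ⟨0, fun e _ s _ => Subsingleton.elim _ _⟩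
  | succ m ih =>
    obtain ⟨e₁, he₁⟩ := ih _ (hβ.comp _ (Fin.succ_injective m))
    obtain ⟨e₀, he₀, hne⟩ := hcore.exists_sum_mul_pow_ne hβ (he₁ e₁ le_rfl)
    refine ⟨e₀, fun e he s hs => ?_⟩
    rw [Fin.sum_univ_succ] at hs
    have hp : p ^ e ≠ 0 := (expChar_pow_pos E p e).ne'
    have hs0 : s 0 = 0 := by
      by_contra hs0
      refine hne (fun j => (s j.succ / s 0) ^ p ^ (e - e₀)) ?_
      simp_rw [← pow_mul, ← pow_add, Nat.sub_add_cancel he, div_pow, mul_div, ← Finset.sum_div]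
      field_simp
      linear_combination hs
    rw [hs0, zero_pow hp, mul_zero, zero_add] at hs
    ext j
    exact Fin.cases hs0 (congrFun (he₁ e (he₀.trans he) (fun j => s j.succ) hs)) j

theorem IsEventuallyFrobeniusIndependent.subalgebra {p : ℕ}
    (hE : IsEventuallyFrobeniusIndependent k E p) (B : Subalgebra k E) :
    IsEventuallyFrobeniusIndependent k B p := fun m β hβ => by
  obtain ⟨e₀, he₀⟩ := hE m (fun j => β j)
    (hβ.map' B.val.toLinearMap (LinearMap.ker_eq_bot.2 Subtype.val_injective))
  refine ⟨e₀, fun e he s hs => ?_⟩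
  have := he₀ e he (fun j => s j) (by simpa using congrArg B.val hs)
  exact funext fun j => Subtype.ext (congrFun this j)

end InfinitelyDivisible

section PoleFiltration

variable {k M : Type*} [Field k] [CommRing M] [Algebra k M] {L : ℕ → Submodule k M} {D c : ℕ}

/-- A filtration of a `k`-algebra behaving like `v ↦ L(v · ∞)` for a divisor `∞` of degree `D`; the
constant `c` bounds the error in the Riemann–Roch estimate. -/
structure IsPoleFiltration (L : ℕ → Submodule k M) (D c : ℕ) : Prop where
  degree_pos : 0 < D
  mono : Monotone L
  one_mem : 1 ∈ L 0
  mul_mem {v w : ℕ} {a b : M} : a ∈ L v → b ∈ L w → a * b ∈ L (v + w)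
  exists_mem (a : M) : ∃ v, a ∈ L v
  finiteDimensional (v : ℕ) : FiniteDimensional k (L v)
  le_finrank_add (v : ℕ) : D * v ≤ Module.finrank k (L v) + c
  finrank_le (v : ℕ) : Module.finrank k (L v) ≤ D * v + c

namespace IsPoleFiltration

theorem pow_mem (hL : IsPoleFiltration L D c) {v : ℕ} {a : M} (ha : a ∈ L v) (n : ℕ) :
    a ^ n ∈ L (n * v) := by
  induction n with
  | zero => simpa using hL.one_mem
  | succ n ih => rw [pow_succ, Nat.succ_mul]; exact hL.mul_mem ih ha

theorem exists_forall_mem (hL : IsPoleFiltration L D c) {ι : Type*} [Finite ι] (a : ι → M) :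
    ∃ v, ∀ i, a i ∈ L v := by
  have := Fintype.ofFinite ι
  choose v hv using fun i => hL.exists_mem (a i)
  exact ⟨Finset.univ.sup v, fun i => hL.mono (Finset.le_sup (Finset.mem_univ i)) (hv i)⟩

theorem card_zeros_le [IsDomain M] (hL : IsPoleFiltration L D c) {w : ℕ} {f : M} (hf : f ≠ 0)
    (hfw : f ∈ L w) {Z : Finset (M →ₐ[k] k)} (hZ : ∀ ω ∈ Z, ω f = 0) : Z.card ≤ D * w + 2 * c := by
  classical
  choose b hb using fun ω : Z => exists_algHom_interpolation (ω := fun η : Z => (η : M →ₐ[k] k))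
    Subtype.val_injective fun η => if η = ω then 1 else 0
  obtain ⟨v, hv⟩ := hL.exists_forall_mem b
  have hmem (x : (Z → k) × L v) : ∑ ω, x.1 ω • b ω + f * x.2 ∈ L (v + w) :=
    add_mem (sum_mem fun ω _ => Submodule.smul_mem _ _ (hL.mono (Nat.le_add_right v w) (hv ω)))
      (mul_comm f x.2 ▸ hL.mul_mem x.2.2 hfw)
  let combine : (Z → k) × L v →ₗ[k] L (v + w) :=
    ((Fintype.linearCombination k b).coprod
      (LinearMap.mulLeft k f ∘ₗ (L v).subtype)).codRestrict _ hmem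
  have hinj : Function.Injective combine := by
    rw [← LinearMap.ker_eq_bot, LinearMap.ker_eq_bot']
    rintro ⟨l, x⟩ hlx
    have hlx : ∑ ω, l ω • b ω + f * x = 0 := congrArg Subtype.val hlx
    have hl : l = 0 := funext fun ω => by
      simpa [hb, hZ ω ω.2] using congrArg (ω : M →ₐ[k] k) hlx
    have hx : (x : M) = 0 := by simpa [hl, hf] using hlx
    exact Prod.ext hl (Subtype.ext hx)
  have := hL.finiteDimensional
  have hrank := LinearMap.finrank_le_finrank_of_injective hinj
  rw [Module.finrank_prod, Module.finrank_fintype_fun_eq_card, Fintype.card_coe] at hrank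
  have hlower := hL.le_finrank_add v
  have hupper := hL.finrank_le (v + w)
  rw [mul_add] at hupper
  omega

theorem exists_linear_relation (hL : IsPoleFiltration L D c) {ι κ : Type*} [Fintype ι] [Fintype κ]
    {u v q : ℕ} {B : ι → M} (hB : ∀ j, B j ∈ L u) {A : κ → M} (hA : ∀ i, A i ∈ L v)
    (hcard : D * (q * u + v) + c < Fintype.card ι * Fintype.card κ) :
    ∃ γ : ι → κ → k, γ ≠ 0 ∧ ∑ j, ∑ i, γ j i • (B j ^ q * A i) = 0 := by
  let family (x : ι × κ) : L (q * u + v) :=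
    ⟨B x.1 ^ q * A x.2, hL.mul_mem (hL.pow_mem (hB x.1) q) (hA x.2)⟩
  have hdep : ¬ LinearIndependent k family := fun hindep => by
    have := hL.finiteDimensional
    have := hindep.fintype_card_le_finrank.trans (hL.finrank_le _)
    rw [Fintype.card_prod] at this
    omega
  obtain ⟨γ, hγ, x, hx⟩ := Fintype.not_linearIndependent_iff.1 hdep
  refine ⟨Function.curry γ, fun h => hx (congrFun (congrFun h x.1) x.2), ?_⟩
  simpa [family, Fintype.sum_prod_type] using congrArg (L _).subtype hγ

end IsPoleFiltration

theorem sum_mul_sum_smul_pow_expChar_pow {ι κ : Type*} [Fintype ι] [Fintype κ] (p e μ : ℕ)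
    [ExpChar M p] (B : ι → M) (γ : ι → κ → k) (A : κ → M) :
    (∑ j, B j * (∑ i, γ j i • A i) ^ p ^ e) ^ p ^ μ =
      ∑ j, ∑ i, γ j i ^ p ^ (e + μ) • (B j ^ p ^ μ * A i ^ p ^ (e + μ)) := by
  simp_rw [← iterateFrobenius_def, map_sum, map_mul, map_sum, Finset.mul_sum, iterateFrobenius_def,
    ← pow_mul, ← pow_add, Algebra.smul_def, mul_pow, map_pow, mul_left_comm]

end PoleFiltration

section BombieriStepanov

variable {k M : Type*} [Field k] [CommRing M] [Algebra k M]
  {L : ℕ → Submodule k M} {D c : ℕ}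

theorem IsPoleFiltration.exists_ne_zero_vanishing [IsAlgClosed k] (hL : IsPoleFiltration L D c)
    (p : ℕ) [ExpChar M p] {m n u v μ e : ℕ} {B : Fin m → M} (hBu : ∀ j, B j ∈ L u)
    (hB : ∀ s : Fin m → M, ∑ j, B j * s j ^ p ^ e = 0 → s = 0)
    {A : Fin n → M} (hA : LinearIndependent k A) (hAv : ∀ i, A i ∈ L v)
    (hmn : D * (p ^ μ * u + v) + c < m * n) {ρ : M → M} (hρ : ∀ a ∈ L v, ρ a ∈ L v) :
    ∃ f ≠ 0, f ∈ L (u + p ^ e * v) ∧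
      ∀ ω : M →ₐ[k] k, (∀ a, ω (ρ a) = ω a ^ p ^ (e + μ)) → ω f = 0 := by
  have hp (d : ℕ) : 0 < p ^ d := expChar_pow_pos M p d
  obtain ⟨κ, hκ, hrel⟩ := hL.exists_linear_relation hBu (A := fun i => ρ (A i))
    (fun i => hρ _ (hAv i)) (by simpa using hmn)
  choose γ hγ using fun j i => IsAlgClosed.exists_pow_nat_eq (κ j i) (hp (e + μ))
  refine ⟨∑ j, B j * (∑ i, γ j i • A i) ^ p ^ e, fun h => hκ ?_, ?_, fun ω hω => ?_⟩
  · ext j i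
    have := Fintype.linearIndependent_iff.1 hA (γ j) (congrFun (hB _ h) j) i
    rw [← hγ, this, zero_pow (hp _).ne']
    rfl
  · exact sum_mem fun j _ => hL.mul_mem (hBu j) (hL.pow_mem
      (sum_mem fun i _ => Submodule.smul_mem _ _ (hAv i)) _)
  · refine pow_eq_zero_iff (hp μ).ne' |>.1 ?_
    rw [← map_pow, sum_mul_sum_smul_pow_expChar_pow]
    simpa [hγ, hω] using congrArg ω hrel

theorem IsPoleFiltration.exists_finrank_mul_gt (hL : IsPoleFiltration L D c) {N q : ℕ}
    (hq : N * (1 + c + D) ≤ q) :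
    ∃ u v, D * (q * u + v) + c < Module.finrank k (L u) * Module.finrank k (L v) ∧
      N * (D * v) ≤ (N + 1) * q := by
  let v := (q + 1 + c) / D + 1
  let u := v + c + c * (q + 1) + 1
  have hv : D * v ≤ q + (1 + c + D) := by
    have := Nat.mul_div_le (q + 1 + c) D
    simp only [v, mul_add]
    omega
  refine ⟨u, v, ?_, by linarith [Nat.mul_le_mul_left N hv]⟩
  have hfinrank : q + 1 ≤ Module.finrank k (L v) := by
    have : q + 1 + c < D * v := Nat.lt_mul_div_succ _ hL.degree_pos
    have := hL.le_finrank_add v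
    omega
  have hu : D * v + (c + c * (q + 1)) < D * u := by
    have := Nat.le_mul_of_pos_left (c + c * (q + 1) + 1) hL.degree_pos
    simp only [u, mul_add, mul_one] at this ⊢
    omega
  refine lt_of_lt_of_le ?_ (Nat.mul_le_mul_left _ hfinrank)
  linarith [Nat.mul_le_mul_right (q + 1) (hL.le_finrank_add u)]

theorem IsPoleFiltration.exists_card_le [IsDomain M] [IsAlgClosed k] (hL : IsPoleFiltration L D c)
    {p : ℕ} (hp : 1 < p) [ExpChar M p] (hM : IsEventuallyFrobeniusIndependent k M p) (N : ℕ) :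
    ∃ C e₀, ∀ e ≥ e₀, ∀ ρ : M → M, (∀ v, ∀ a ∈ L v, ρ a ∈ L v) →
      ∀ Z : Finset (M →ₐ[k] k), (∀ ω ∈ Z, ∀ a, ω (ρ a) = ω a ^ p ^ e) →
        N * Z.card ≤ (N + 1) * p ^ e + C := by
  let μ := N * (1 + c + D)
  obtain ⟨u, v, hdim, hv⟩ := hL.exists_finrank_mul_gt (N := N) (Nat.lt_pow_self (n := μ) hp).le
  have := hL.finiteDimensional
  let A := Module.finBasis k (L v)
  let B := Module.finBasis k (L u)
  obtain ⟨e₀, he₀⟩ := hM _ _ (B.linearIndependent.map' _ (L u).ker_subtype)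
  refine ⟨N * (D * u + 2 * c), e₀ + μ, fun e' he' ρ hρ Z hZ => ?_⟩
  obtain ⟨e, rfl⟩ : ∃ e, e' = e + μ := ⟨e' - μ, by omega⟩
  obtain ⟨f, hf, hfw, hfZ⟩ := hL.exists_ne_zero_vanishing p (fun j => (B j).2)
    (he₀ e (by omega)) (A.linearIndependent.map' _ (L v).ker_subtype) (fun i => (A i).2) hdim (hρ v)
  have hcard := hL.card_zeros_le hf hfw fun ω hω => hfZ ω (hZ ω hω)
  calc N * Z.card ≤ N * (D * (u + p ^ e * v) + 2 * c) := Nat.mul_le_mul_left N hcard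
    _ = p ^ e * (N * (D * v)) + N * (D * u + 2 * c) := by ring
    _ ≤ p ^ e * ((N + 1) * p ^ μ) + N * (D * u + 2 * c) :=
      Nat.add_le_add_right (Nat.mul_le_mul_left _ hv) _
    _ = (N + 1) * p ^ (e + μ) + N * (D * u + 2 * c) := by ring

end BombieriStepanov

section PoleSpaceFiltration

variable {k E : Type*} [Field k] [Field E] [Algebra k E] {T : E}

theorem exists_isPoleFiltration_poleSpace [IsAlgClosed k] (hT : Transcendental k T)
    [FiniteDimensional (IntermediateField.adjoin k {T}) E] :
    ∃ c, IsPoleFiltration (poleSpace k T)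
      (Module.finrank (IntermediateField.adjoin k {T}) E) c := by
  obtain ⟨c, hc⟩ := exists_le_finrank_poleSpace (k := k) hT
  refine ⟨c + 1, Module.finrank_pos, poleSpace_mono, ?_, mul_mem_poleSpace,
    exists_mem_poleSpace (ne_zero_of_transcendental hT), finiteDimensional_poleSpace hT,
    fun v => (hc v).trans (by omega), fun v => ?_⟩
  · simp [mem_poleSpace, one_mem]
  · have := Module.finrank_le_of_rank_le (rank_poleSpace_le (k := k) hT v)
    omega

end PoleSpaceFiltration

section Separable

variable {F : Type*} [Field F]

theorem separable_sub_C_of_forall_aeval_ne (K : Type*) [Field K] [IsAlgClosed K] [Algebra F K]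
    {P : F[X]} {t : F} (h : ∀ x : K, aeval x (derivative P) = 0 → aeval x P ≠ algebraMap F K t) :
    (P - C t).Separable := by
  rw [separable_def, isCoprime_iff_aeval_ne_zero_of_isAlgClosed F K]
  intro x
  simpa [sub_eq_zero, imp_iff_not_or, or_comm] using h x

theorem separable_map_sub_C_of_transcendental {k : Type*} [Field k] [Algebra k F] {t : F}
    (ht : Transcendental k t) {g : k[X]} (hg : derivative g ≠ 0) :
    (g.map (algebraMap k F) - C t).Separable := by
  refine separable_sub_C_of_forall_aeval_ne (AlgebraicClosure F) fun x hx hxt => hg ?_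
  rw [aeval_map_algebraMap] at hxt
  rw [derivative_map, aeval_map_algebraMap] at hx
  have htrans : Transcendental k (aeval x g) :=
    hxt ▸ (transcendental_algebraMap_iff (algebraMap F (AlgebraicClosure F)).injective).2 ht
  exact transcendental_iff.1 (transcendental_aeval_iff.1 htrans).1 _ hx

theorem rootSet_eq_of_map_eq {E : Type*} [Field E] [Algebra F E] {P : F[X]} {a : E} (ha : a ≠ 0)
    {S : Finset E} (hP : P.map (algebraMap F E) = C a * ∏ x ∈ S, (X - C x)) :
    P.rootSet E = S := by
  ext x
  have hP0 : P.map (algebraMap F E) ≠ 0 :=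
    hP ▸ mul_ne_zero (C_ne_zero.2 ha) (Finset.prod_ne_zero_iff.2 fun x _ => X_sub_C_ne_zero x)
  rw [mem_rootSet', ← eval_map_algebraMap, and_iff_right hP0, hP]
  simp [ha, eval_prod, Finset.prod_eq_zero_iff, sub_eq_zero]

end Separable

section GenericFiber

variable {k E : Type*} [Field k] [Field E] [Algebra k E] {g : k[X]} {T : E} {S : Finset E}

theorem aeval_mem_subalgebra {A : Subalgebra k E} {x : E} (hx : x ∈ A) (P : k[X]) :
    aeval x P ∈ A :=
  Algebra.adjoin_le (Set.singleton_subset_iff.2 hx) (aeval_mem_adjoin_singleton k x)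

/-- `E` is a splitting field of `g - T` over `k(T)`, where `T` is transcendental over `k`, and `S`
is the set of roots of `g - T`, all of them simple: the fibre of `g` over the generic point `T` of
the line, inside the function field of the Galois closure of `g`. -/
structure IsGenericFiber (g : k[X]) (T : E) (S : Finset E) : Prop where
  transcendental : Transcendental k T
  map_sub_C_eq : g.map (algebraMap k E) - C T =
    C (algebraMap k E g.leadingCoeff) * ∏ x ∈ S, (X - C x)
  adjoin_eq_top : IntermediateField.adjoin k (S : Set E) = ⊤

namespace IsGenericFiber

theorem aeval_sub_eq (h : IsGenericFiber g T S) (y : E) :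
    aeval y g - T = algebraMap k E g.leadingCoeff * ∏ x ∈ S, (y - x) := by
  simpa [eval_prod] using congrArg (eval y) h.map_sub_C_eq

theorem leadingCoeff_ne_zero (h : IsGenericFiber g T S) : g.leadingCoeff ≠ 0 := fun h0 =>
  ne_zero_of_transcendental h.transcendental <| by
    simpa [leadingCoeff_eq_zero.1 h0] using h.aeval_sub_eq 0

theorem mem_iff (h : IsGenericFiber g T S) {y : E} : y ∈ S ↔ aeval y g = T := by
  rw [← sub_eq_zero (a := aeval y g), h.aeval_sub_eq, mul_eq_zero, Finset.prod_eq_zero_iff]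
  simp [h.leadingCoeff_ne_zero, sub_eq_zero]

theorem card_eq (h : IsGenericFiber g T S) : S.card = g.natDegree := by
  have hdeg := congrArg natDegree h.map_sub_C_eq
  rw [natDegree_sub_C, natDegree_map,
    natDegree_C_mul (by simpa using h.leadingCoeff_ne_zero)] at hdeg
  simp [hdeg]

theorem transcendental_of_mem (h : IsGenericFiber g T S) {x : E} (hx : x ∈ S) :
    Transcendental k x :=
  (transcendental_aeval_iff.1 (h.mem_iff.1 hx ▸ h.transcendental)).1

theorem nonempty (h : IsGenericFiber g T S) : S.Nonempty := by
  rw [← Finset.card_pos, h.card_eq, Nat.pos_iff_ne_zero]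
  intro hdeg
  obtain ⟨c, rfl⟩ := natDegree_eq_zero.1 hdeg
  have := h.aeval_sub_eq 0
  rw [Finset.card_eq_zero.1 (h.card_eq.trans hdeg)] at this
  exact ne_zero_of_transcendental h.transcendental (by simpa using this)

theorem mem_integralOver (h : IsGenericFiber g T S) {x : E} (hx : x ∈ S) :
    x ∈ integralOver k T := by
  have hlc : algebraMap k E g.leadingCoeff ≠ 0 := by simpa using h.leadingCoeff_ne_zero
  have hprod : ∏ y ∈ S, (X - C y) =
      C (algebraMap k E g.leadingCoeff⁻¹) * (g.map (algebraMap k E) - C T) := by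
    rw [h.map_sub_C_eq, ← mul_assoc, ← C_mul, map_inv₀, inv_mul_cancel₀ hlc, C_1, one_mul]
  refine mem_integralOver_of_eval_eq_zero (monic_prod_X_sub_C id S) (fun i => ?_)
    (by rw [eval_prod]; exact Finset.prod_eq_zero hx (by simp))
  simp only [id, hprod, coeff_C_mul, coeff_sub, coeff_map, coeff_C]
  refine mul_mem (Subalgebra.algebraMap_mem _ _) (sub_mem (Subalgebra.algebraMap_mem _ _) ?_)
  split_ifs
  exacts [mem_integralOver_self T, zero_mem _]

theorem gal_ext (h : IsGenericFiber g T S) {F : IntermediateField k E} {σ σ' : Gal(E/F)}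
    (hσ : ∀ x ∈ S, σ x = σ' x) : σ = σ' := by
  ext z
  have hz : z ∈ IntermediateField.adjoin k (S : Set E) :=
    h.adjoin_eq_top ▸ IntermediateField.mem_top
  induction hz using IntermediateField.adjoin_induction with
  | mem x hx => exact hσ x hx
  | algebraMap c => exact (σ.commutes (algebraMap k F c)).trans (σ'.commutes _).symm
  | add x y _ _ hx hy => rw [map_add, map_add, hx, hy]
  | inv x _ hx => rw [map_inv₀, map_inv₀, hx]
  | mul x y _ _ hx hy => rw [map_mul, map_mul, hx, hy]

theorem splits (h : IsGenericFiber g T S) : (g.map (algebraMap k E) - C T).Splits := by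
  rw [h.map_sub_C_eq]
  exact (Splits.C _).mul (Splits.prod fun x _ => Splits.X_sub_C x)

theorem isSplittingField {F : IntermediateField k E} {t : F} (h : IsGenericFiber g (t : E) S) :
    IsSplittingField F E (g.map (algebraMap k F) - C t) := by
  have hmap : (g.map (algebraMap k F) - C t).map (algebraMap F E) =
      g.map (algebraMap k E) - C (t : E) := by
    rw [Polynomial.map_sub, Polynomial.map_map, map_C, ← IsScalarTower.algebraMap_eq]
    rfl
  refine isSplittingField_iff_intermediateField.2 ⟨hmap ▸ h.splits, ?_⟩
  · rw [rootSet_eq_of_map_eq (by simpa using h.leadingCoeff_ne_zero) (hmap.trans h.map_sub_C_eq),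
      ← IntermediateField.restrictScalars_eq_top_iff (K := k), eq_top_iff, ← h.adjoin_eq_top,
      IntermediateField.adjoin_le_iff]
    exact IntermediateField.subset_adjoin F _

theorem finiteDimensional {F : IntermediateField k E} {t : F} (h : IsGenericFiber g (t : E) S) :
    FiniteDimensional F E :=
  have := h.isSplittingField
  IsSplittingField.finiteDimensional E (g.map (algebraMap k F) - C t)

theorem isGalois {F : IntermediateField k E} {t : F} (h : IsGenericFiber g (t : E) S)
    (hg : derivative g ≠ 0) : IsGalois F E :=
  have := h.isSplittingField
  IsGalois.of_separable_splitting_field <| separable_map_sub_C_of_transcendental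
    ((transcendental_algebraMap_iff (algebraMap F E).injective).1 h.transcendental) hg

end IsGenericFiber

theorem adjoin_eq_top_of_isSplittingField {F : Type*} [Field F] [Algebra k F] [Algebra F E]
    [IsScalarTower k F E] {P : F[X]} [IsSplittingField F E P]
    (hF : ∀ a, algebraMap F E a ∈ IntermediateField.adjoin k (P.rootSet E)) :
    IntermediateField.adjoin k (P.rootSet E) = ⊤ := by
  refine eq_top_iff.2 fun z _ => ?_
  have hz : z ∈ IntermediateField.adjoin F (P.rootSet E) :=
    (isSplittingField_iff_intermediateField.1 ‹_›).2 ▸ IntermediateField.mem_top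
  induction hz using IntermediateField.adjoin_induction with
  | mem x hx => exact IntermediateField.subset_adjoin k _ hx
  | algebraMap a => exact hF a
  | add x y _ _ hx hy => exact add_mem (hx trivial) (hy trivial)
  | inv x _ hx => exact inv_mem (hx trivial)
  | mul x y _ _ hx hy => exact mul_mem (hx trivial) (hy trivial)

theorem algebraMap_ratFunc_mem_adjoin_rootSet {k E : Type*} [Field k] [Field E] [Algebra k E]
    [Algebra (RatFunc k) E] [IsScalarTower k (RatFunc k) E] {g : k[X]} (hg : 0 < g.degree)
    [hE : IsSplittingField (RatFunc k) E (g.map (algebraMap k (RatFunc k)) - C RatFunc.X)]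
    (a : RatFunc k) : algebraMap (RatFunc k) E a ∈ IntermediateField.adjoin k
      ((g.map (algebraMap k (RatFunc k)) - C RatFunc.X).rootSet E) := by
  set P := g.map (algebraMap k (RatFunc k)) - C RatFunc.X
  have hdeg : P.degree = g.degree := by
    rw [degree_sub_C (by rwa [degree_map]), degree_map]
  obtain ⟨x, hx⟩ := hE.splits'.exists_eval_eq_zero (by rw [degree_map, hdeg]; exact hg.ne')
  have hxP : x ∈ P.rootSet E := by
    rw [mem_rootSet, ← eval_map_algebraMap]
    exact ⟨ne_zero_of_degree_gt (hdeg ▸ hg), hx⟩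
  have hT : aeval x g = algebraMap (RatFunc k) E RatFunc.X := by
    have hx := aeval_eq_zero_of_mem_rootSet hxP
    rwa [map_sub, aeval_map_algebraMap, aeval_C, sub_eq_zero] at hx
  have ha : a ∈ IntermediateField.adjoin k {(RatFunc.X : RatFunc k)} :=
    (RatFunc.adjoin_X (K := k)).symm ▸ IntermediateField.mem_top
  have hle : IntermediateField.adjoin k {(RatFunc.X : RatFunc k)} ≤
      (IntermediateField.adjoin k (P.rootSet E)).comap
        (IsScalarTower.toAlgHom k (RatFunc k) E) := by
    rw [IntermediateField.adjoin_simple_le_iff]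
    change algebraMap (RatFunc k) E RatFunc.X ∈ IntermediateField.adjoin k (P.rootSet E)
    rw [← hT]
    exact aeval_mem_subalgebra (A := (IntermediateField.adjoin k _).toSubalgebra)
      (IntermediateField.subset_adjoin k _ hxP) g
  exact hle ha

theorem exists_isGenericFiber {k : Type u} [Field k] {g : k[X]} (hg : derivative g ≠ 0) :
    ∃ (E : Type u) (_ : Field E) (_ : Algebra k E) (T : E) (S : Finset E),
      IsGenericFiber g T S := by
  have hdeg : 0 < g.degree :=
    natDegree_pos_iff_degree_pos.1 (Nat.pos_of_ne_zero fun h => hg (derivative_of_natDegree_zero h))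
  let P : (RatFunc k)[X] := g.map (algebraMap k (RatFunc k)) - C RatFunc.X
  have hX : Transcendental k (RatFunc.X : RatFunc k) := RatFunc.transcendental_X
  obtain ⟨S, hS⟩ := exists_finset_of_splits (algebraMap (RatFunc k) P.SplittingField)
    (separable_map_sub_C_of_transcendental hX hg)
    (SplittingField.splits P)
  have hlc : P.leadingCoeff = algebraMap k (RatFunc k) g.leadingCoeff := by
    rw [leadingCoeff_sub_of_degree_lt (degree_C_le.trans_lt (by rwa [degree_map])),
      leadingCoeff_map]
  have hfib : g.map (algebraMap k P.SplittingField) -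
      C (algebraMap (RatFunc k) P.SplittingField RatFunc.X) =
        C (algebraMap k P.SplittingField g.leadingCoeff) * ∏ x ∈ S, (X - C x) := by
    rwa [hlc, Polynomial.map_sub, Polynomial.map_map, map_C, ← IsScalarTower.algebraMap_eq,
      ← IsScalarTower.algebraMap_apply] at hS
  refine ⟨P.SplittingField, inferInstance, inferInstance,
    algebraMap (RatFunc k) P.SplittingField RatFunc.X, S,
    (transcendental_algebraMap_iff (algebraMap (RatFunc k) _).injective).2 hX, hfib, ?_⟩
  have hlc0 : algebraMap (RatFunc k) P.SplittingField P.leadingCoeff ≠ 0 := by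
    rw [hlc]
    simpa using ne_zero_of_degree_gt hdeg
  rw [← rootSet_eq_of_map_eq hlc0 hS]
  exact adjoin_eq_top_of_isSplittingField (P := P) (algebraMap_ratFunc_mem_adjoin_rootSet hdeg)

end GenericFiber

section Semilinear

variable {k E : Type*} [Field k] [Field E] [Algebra k E]

theorem IsFrobeniusSemilinear.map_aeval {Q : ℕ} {ρ : E →+* E} (hρ : IsFrobeniusSemilinear k Q ρ)
    {g : k[X]} (hg : ∀ i, g.coeff i ^ Q = g.coeff i) (x : E) : ρ (aeval x g) = aeval (ρ x) g := by
  simp only [aeval_eq_sum_range, map_sum, Algebra.smul_def, map_mul, hρ _, ← map_pow, hg]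

theorem exists_ringHom_extending_of_isSplittingField {F L : Type*} [Field F] [Field L] [Algebra F E]
    (P : F[X]) [IsSplittingField F E P] (θ : F →+* L) (hP : (P.map θ).Splits) :
    ∃ ρ : E →+* L, ∀ a, ρ (algebraMap F E a) = θ a :=
  let := θ.toAlgebra
  ⟨IsSplittingField.lift E P hP, (IsSplittingField.lift E P hP).commutes⟩

theorem exists_ringHom_adjoin_simple {L : Type*} [Field L] (φ : k →+* L) {x : E}
    (hx : Transcendental k x) {y : L} (hy : ∀ P : k[X], P.eval₂ φ y = 0 → P = 0) :
    ∃ θ : IntermediateField.adjoin k {x} →+* L,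
      ∀ P : k[X], θ (aeval (IntermediateField.AdjoinSimple.gen k x) P) = P.eval₂ φ y := by
  have hinj : Function.Injective (eval₂RingHom φ y) := (injective_iff_map_eq_zero _).2 hy
  let lift : RatFunc k →+* L := RatFunc.liftRingHom (eval₂RingHom φ y)
    (nonZeroDivisors_le_comap_nonZeroDivisors_of_injective _ hinj)
  refine ⟨lift.comp (RatFunc.algEquivOfTranscendental x hx).symm, fun P => ?_⟩
  simp [lift]

namespace IsGenericFiber

variable {g : k[X]} {T : E} {S : Finset E}

theorem map_mem (h : IsGenericFiber g T S) {Q : ℕ} (hg : ∀ i, g.coeff i ^ Q = g.coeff i)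
    {ρ : E →+* E} (hρ : IsFrobeniusSemilinear k Q ρ) (hT : ρ T = T) {x : E} (hx : x ∈ S) :
    ρ x ∈ S := by
  rw [h.mem_iff, ← hρ.map_aeval hg, h.mem_iff.1 hx, hT]

theorem exists_isFrobeniusSemilinear (h : IsGenericFiber g T S) (p s : ℕ) [ExpChar k p]
    (hg : ∀ i, g.coeff i ^ p ^ s = g.coeff i) {x y : E} (hx : x ∈ S) (hy : y ∈ S) :
    ∃ ρ : E →+* E, IsFrobeniusSemilinear k (p ^ s) ρ ∧ ρ T = T ∧ ρ x = y := by
  have hgmap : g.map (iterateFrobenius k p s) = g := Polynomial.ext fun i => by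
    rw [coeff_map, iterateFrobenius_def, hg]
  let φ := (algebraMap k E).comp (iterateFrobenius k p s)
  obtain ⟨θ, hθ⟩ := exists_ringHom_adjoin_simple φ (h.transcendental_of_mem hx) (y := y)
    fun P hP => by
      rw [← eval₂_map] at hP
      exact (Polynomial.map_eq_zero _).1 (transcendental_iff.1 (h.transcendental_of_mem hy) _ hP)
  have hθC (c : k) : θ (algebraMap k _ c) = φ c := by
    simpa using hθ (C c)
  let t := aeval (IntermediateField.AdjoinSimple.gen k x) g
  have ht : (t : E) = T := by
    rw [← h.mem_iff.1 hx]
    exact (aeval_algebraMap_apply E (IntermediateField.AdjoinSimple.gen k x) g).symm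
  have hθt : θ t = T := by
    rw [hθ, ← eval₂_map, hgmap]
    exact h.mem_iff.1 hy
  subst ht
  have hsplits : ((g.map (algebraMap k _) - C t).map θ).Splits := by
    rw [Polynomial.map_sub, Polynomial.map_map, map_C, hθt,
      show θ.comp (algebraMap k _) = φ from RingHom.ext hθC, ← Polynomial.map_map, hgmap]
    exact h.splits
  have := h.isSplittingField
  obtain ⟨ρ, hρ⟩ := exists_ringHom_extending_of_isSplittingField (E := E) _ θ hsplits
  refine ⟨ρ, fun c => (hρ (algebraMap k _ c)).trans (hθC c), (hρ t).trans hθt, ?_⟩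
  simpa using (hρ (IntermediateField.AdjoinSimple.gen k x)).trans (by simpa using hθ X)

end IsGenericFiber

end Semilinear

theorem degree_reverse_lt {R : Type*} [Semiring R] {P : R[X]} (hP : P.coeff 0 = 0) :
    P.reverse.degree < P.natDegree := by
  refine (degree_lt_iff_coeff_zero _ _).2 fun i hi => ?_
  obtain rfl | hi := hi.eq_or_lt
  · rw [coeff_reverse, revAt_le le_rfl, Nat.sub_self, hP]
  · exact coeff_eq_zero_of_natDegree_lt (P.reverse_natDegree_le.trans_lt hi)

theorem map_algebraMap_scaleRoots_map {k A B : Type*} [Field k] [CommRing A] [Nontrivial A]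
    [Algebra k A] [CommRing B] [Nontrivial B] [Algebra k B] (ψ : A →ₐ[k] B) (g : k[X]) (a : A) :
    ((g.map (algebraMap k A)).scaleRoots a).map (ψ : A →+* B) =
      (g.map (algebraMap k B)).scaleRoots (ψ a) := by
  obtain rfl | hg := eq_or_ne g 0
  · simp
  rw [map_scaleRoots, Polynomial.map_map, AlgHom.comp_algebraMap]
  · rfl
  · rw [leadingCoeff_map, AlgHom.coe_toRingHom, ψ.commutes]
    simpa using hg

theorem two_ne_zero_of_odd_expChar (k : Type*) [Field k] {p : ℕ} [ExpChar k p] (hp : Odd p) :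
    (2 : k) ≠ 0 := fun h2 => by
  have := CharTwo.of_one_ne_zero_of_two_eq_zero one_ne_zero h2
  obtain rfl := ExpChar.eq ‹ExpChar k p› (.prime Nat.prime_two)
  exact absurd hp (by decide)

theorem ne_pow_mul_of_odd {k : Type*} [Field k] (hk : (2 : k) ≠ 0) {z θ : k} {m Q : ℕ}
    (hQ : Odd Q) (hz : z ^ (m + m) = 1) (hθ : θ ^ m = -1) : z ≠ z ^ Q * θ := fun h => by
  have hneg : z ^ m = -(z ^ m) ^ Q := by
    conv_lhs => rw [h, mul_pow, hθ, mul_neg_one, ← pow_mul, mul_comm, pow_mul]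
  rw [pow_add, mul_self_eq_one_iff] at hz
  refine hk ?_
  rcases hz with hz | hz <;> rw [hz] at hneg
  · rw [one_pow] at hneg
    linear_combination hneg
  · rw [hQ.neg_one_pow] at hneg
    linear_combination -hneg

namespace IsGenericFiber

variable {k E : Type*} [Field k] [Field E] [Algebra k E] {g : k[X]} {T x y : E} {S : Finset E}

theorem ne_zero_of_mem (h : IsGenericFiber g T S) (hx : x ∈ S) : x ≠ 0 :=
  ne_zero_of_transcendental (h.transcendental_of_mem hx)

theorem aeval_inv_reverse (h : IsGenericFiber g T S) (hx : x ∈ S) :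
    aeval x⁻¹ g.reverse = T * x⁻¹ ^ g.natDegree := by
  let := invertibleOfNonzero (h.ne_zero_of_mem hx)
  have := eval₂_reverse_mul_pow (algebraMap k E) x g
  rw [invOf_eq_inv, ← aeval_def, ← aeval_def, h.mem_iff.1 hx] at this
  rw [← this, mul_assoc, ← mul_pow, mul_inv_cancel₀ (h.ne_zero_of_mem hx), one_pow, mul_one]

theorem inv_mem_integralOver_inv (h : IsGenericFiber g T S) (hg : g.coeff 0 = 0) (hx : x ∈ S) :
    x⁻¹ ∈ integralOver k T⁻¹ := by
  have hT := ne_zero_of_transcendental h.transcendental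
  have hdeg : (C T⁻¹ * g.reverse.map (algebraMap k E)).degree < g.natDegree := by
    rw [degree_C_mul (inv_ne_zero hT), degree_map]
    exact degree_reverse_lt hg
  refine mem_integralOver_of_eval_eq_zero (monic_X_pow_sub hdeg) (fun i => ?_) ?_
  · rw [coeff_sub, coeff_C_mul, coeff_map, coeff_X_pow]
    refine sub_mem ?_ (mul_mem (mem_integralOver_self _) (Subalgebra.algebraMap_mem _ _))
    split_ifs
    exacts [one_mem _, zero_mem _]
  · rw [eval_sub, eval_pow, eval_X, eval_C_mul, eval_map_algebraMap, h.aeval_inv_reverse hx,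
      inv_mul_cancel_left₀ hT, sub_self]

theorem prod_X_sub_C_div_eq [Infinite k] (h : IsGenericFiber g T S) (hy : y ∈ S) :
    C (algebraMap k E g.leadingCoeff) * ∏ x ∈ S, (X - C (x / y)) =
      (g.map (algebraMap k E)).scaleRoots y⁻¹ - C (aeval y⁻¹ g.reverse) := by
  have hy0 := h.ne_zero_of_mem hy
  have : Infinite E := .of_injective _ (algebraMap k E).injective
  refine Polynomial.funext fun z => ?_
  have hscale := scaleRoots_eval₂_mul (p := g.map (algebraMap k E)) (RingHom.id E) (z * y) y⁻¹
  rw [RingHom.id_apply, mul_comm z, inv_mul_cancel_left₀ hy0, eval₂_id, eval₂_id,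
    eval_map_algebraMap, natDegree_map] at hscale
  rw [eval_sub, hscale, eval_C, h.aeval_inv_reverse hy, mul_comm T, ← mul_sub, h.aeval_sub_eq,
    ← h.card_eq, eval_C_mul, eval_prod, mul_left_comm, ← Finset.prod_const,
    ← Finset.prod_mul_distrib]
  refine congrArg _ (Finset.prod_congr rfl fun x _ => ?_)
  simp [mul_sub, hy0, div_eq_inv_mul]

theorem div_mem_integralOver_inv [Infinite k] (h : IsGenericFiber g T S) (hg : g.coeff 0 = 0)
    (hx : x ∈ S) (hy : y ∈ S) : x / y ∈ integralOver k T⁻¹ := by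
  have hlc : algebraMap k E g.leadingCoeff ≠ 0 := by simpa using h.leadingCoeff_ne_zero
  have hu := h.inv_mem_integralOver_inv hg hy
  have hprod : ∏ x ∈ S, (X - C (x / y)) = C (algebraMap k E g.leadingCoeff⁻¹) *
      ((g.map (algebraMap k E)).scaleRoots y⁻¹ - C (aeval y⁻¹ g.reverse)) := by
    rw [← h.prod_X_sub_C_div_eq hy, ← mul_assoc, ← C_mul, map_inv₀, inv_mul_cancel₀ hlc, C_1,
      one_mul]
  refine mem_integralOver_of_eval_eq_zero (monic_prod_X_sub_C (· / y) S) (fun i => ?_)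
    (by rw [eval_prod]; exact Finset.prod_eq_zero hx (by simp))
  rw [hprod, coeff_C_mul, coeff_sub, coeff_scaleRoots, coeff_map, coeff_C]
  refine mul_mem (Subalgebra.algebraMap_mem _ _)
    (sub_mem (mul_mem (Subalgebra.algebraMap_mem _ _) (pow_mem hu _)) ?_)
  split_ifs
  exacts [aeval_mem_subalgebra hu _, zero_mem _]

theorem map_inv_eq_zero (h : IsGenericFiber g T S) (hg : g.coeff 0 = 0)
    {φ : integralOver k T⁻¹ →ₐ[k] k} (hφ : φ ⟨T⁻¹, mem_integralOver_self T⁻¹⟩ = 0) (hx : x ∈ S) :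
    φ ⟨x⁻¹, h.inv_mem_integralOver_inv hg hx⟩ = 0 := by
  let u : integralOver k T⁻¹ := ⟨x⁻¹, h.inv_mem_integralOver_inv hg hx⟩
  have hu : u ^ g.natDegree = ⟨T⁻¹, mem_integralOver_self T⁻¹⟩ * aeval u g.reverse := by
    refine Subtype.ext ?_
    have hT := ne_zero_of_transcendental h.transcendental
    rw [MulMemClass.coe_mul, ← Subalgebra.aeval_coe, h.aeval_inv_reverse hx,
      inv_mul_cancel_left₀ hT]
    rfl
  refine eq_zero_of_pow_eq_zero (n := g.natDegree) ?_
  rw [← map_pow, hu, map_mul, hφ, zero_mul]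

theorem prod_X_sub_C_map_div_eq [Infinite k] (h : IsGenericFiber g T S) (hg : g.coeff 0 = 0)
    {φ : integralOver k T⁻¹ →ₐ[k] k} (hφ : φ ⟨T⁻¹, mem_integralOver_self T⁻¹⟩ = 0) (hy : y ∈ S) :
    ∏ x : S, (X - C (φ ⟨x / y, h.div_mem_integralOver_inv hg x.2 hy⟩)) =
      X ^ g.natDegree - 1 := by
  let u : integralOver k T⁻¹ := ⟨y⁻¹, h.inv_mem_integralOver_inv hg hy⟩
  have hlc : C g.leadingCoeff ≠ 0 := C_ne_zero.2 h.leadingCoeff_ne_zero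
  have hB : C (algebraMap k (integralOver k T⁻¹) g.leadingCoeff) *
      ∏ x : S, (X - C (⟨x / y, h.div_mem_integralOver_inv hg x.2 hy⟩ : integralOver k T⁻¹)) =
      (g.map (algebraMap k (integralOver k T⁻¹))).scaleRoots u - C (aeval u g.reverse) := by
    refine map_injective ((integralOver k T⁻¹).val : integralOver k T⁻¹ →+* E)
      Subtype.val_injective ?_
    have hE := h.prod_X_sub_C_div_eq hy
    rw [← Finset.prod_coe_sort] at hE
    simp only [Polynomial.map_mul, Polynomial.map_prod, Polynomial.map_sub, map_C, map_X,
      AlgHom.coe_toRingHom, AlgHom.commutes, ← aeval_algHom_apply,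
      map_algebraMap_scaleRoots_map (integralOver k T⁻¹).val]
    exact hE
  have hk := congrArg (Polynomial.map (φ : integralOver k T⁻¹ →+* k)) hB
  simp only [Polynomial.map_mul, Polynomial.map_prod, Polynomial.map_sub, map_C, map_X,
    AlgHom.coe_toRingHom, AlgHom.commutes, ← aeval_algHom_apply,
    map_algebraMap_scaleRoots_map φ] at hk
  refine mul_left_cancel₀ hlc (hk.trans ?_)
  rw [show φ u = 0 from h.map_inv_eq_zero hg hφ hy, scaleRoots_zero]
  simp [smul_eq_C_mul, mul_sub, aeval_def, eval₂_at_zero]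

theorem pow_map_div_eq_one [Infinite k] (h : IsGenericFiber g T S) (hg : g.coeff 0 = 0)
    {φ : integralOver k T⁻¹ →ₐ[k] k} (hφ : φ ⟨T⁻¹, mem_integralOver_self T⁻¹⟩ = 0) (hx : x ∈ S)
    (hy : y ∈ S) : φ ⟨x / y, h.div_mem_integralOver_inv hg hx hy⟩ ^ g.natDegree = 1 := by
  have := congrArg (eval (φ ⟨x / y, h.div_mem_integralOver_inv hg hx hy⟩))
    (h.prod_X_sub_C_map_div_eq hg hφ hy)
  rw [eval_prod, Finset.prod_eq_zero (Finset.mem_univ ⟨x, hx⟩) (by simp)] at this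
  simpa [sub_eq_zero] using this.symm

theorem exists_map_div_eq [Infinite k] (h : IsGenericFiber g T S) (hg : g.coeff 0 = 0)
    {φ : integralOver k T⁻¹ →ₐ[k] k} (hφ : φ ⟨T⁻¹, mem_integralOver_self T⁻¹⟩ = 0) (hy : y ∈ S)
    {θ : k} (hθ : θ ^ g.natDegree = 1) :
    ∃ x, ∃ hx : x ∈ S, φ ⟨x / y, h.div_mem_integralOver_inv hg hx hy⟩ = θ := by
  have := congrArg (eval θ) (h.prod_X_sub_C_map_div_eq hg hφ hy)
  rw [eval_prod, eval_sub, eval_pow, eval_X, eval_one, hθ, sub_self,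
    Finset.prod_eq_zero_iff] at this
  obtain ⟨x, -, hx⟩ := this
  exact ⟨x, x.2, (sub_eq_zero.1 (by simpa using hx)).symm⟩

theorem exists_isFrobeniusAt_inv [IsAlgClosed k] (h : IsGenericFiber g T S)
    (hg' : derivative g ≠ 0) (hg : g.coeff 0 = 0) (p s : ℕ) [ExpChar k p]
    {φ : integralOver k T⁻¹ →ₐ[k] k} (hφ : φ ⟨T⁻¹, mem_integralOver_self T⁻¹⟩ = 0)
    {ρ : E →+* E} (hρ : IsFrobeniusSemilinear k (p ^ s) ρ) (hT : ρ T = T)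
    (hy : y ∈ S) (hρy : ρ y ∈ S) :
    ∃ ρ' : E →+* E, IsFrobeniusSemilinear k (p ^ s) ρ' ∧ ρ' T = T ∧ ρ' y = ρ y ∧
      IsFrobeniusAt (p ^ s) ρ' φ := by
  let u : integralOver k T⁻¹ := ⟨y⁻¹, h.inv_mem_integralOver_inv hg hy⟩
  let F := IntermediateField.adjoin k {(u : E)}
  have hyF : y ∈ F := by
    rw [← inv_inv y]
    exact inv_mem (IntermediateField.mem_adjoin_simple_self k _)
  have hTF : T ∈ F := h.mem_iff.1 hy ▸ aeval_mem_subalgebra (A := F.toSubalgebra) hyF g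
  have hfib : IsGenericFiber g ((⟨T, hTF⟩ : F) : E) S := h
  have := hfib.finiteDimensional
  have := hfib.isGalois hg'
  have hfix (σ : Gal(E/F)) {z : E} (hz : z ∈ F) : σ z = z := σ.commutes ⟨z, hz⟩
  obtain ⟨σ, hσ⟩ := exists_isFrobeniusAt p s (u := u)
    (transcendental_inv (h.transcendental_of_mem hy))
    (fun σ b hb => map_mem_integralOver (isFrobeniusSemilinear_algHom
      ((σ : E →ₐ[F] E).restrictScalars k)) (hfix σ (inv_mem hTF)) hb) hρ
    (fun b hb => map_mem_integralOver hρ (by rw [map_inv₀, hT]) hb) φ (by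
        have hρu : φ ⟨ρ y⁻¹, map_mem_integralOver hρ (by rw [map_inv₀, hT]) u.2⟩ = 0 := by
          simp only [map_inv₀]
          exact h.map_inv_eq_zero hg hφ hρy
        rw [h.map_inv_eq_zero hg hφ hy, zero_pow (pow_pos (expChar_pos k p) s).ne', hρu])
  refine ⟨ρ.comp (σ : E →+* E), hρ.comp_algHom ((σ : E →ₐ[F] E).restrictScalars k), ?_, ?_, hσ⟩
  · exact (congrArg ρ (hfix σ hTF)).trans hT
  · exact congrArg ρ (hfix σ hyF)

theorem exists_isFrobeniusSemilinear_forall_ne [IsAlgClosed k] (h : IsGenericFiber g T S)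
    (hg' : derivative g ≠ 0) (hg : g.coeff 0 = 0) (heven : Even g.natDegree) (p s : ℕ)
    [ExpChar k p] (hp : Odd p) (hgs : ∀ i, g.coeff i ^ p ^ s = g.coeff i) :
    ∃ ρ : E →+* E, IsFrobeniusSemilinear k (p ^ s) ρ ∧ ρ T = T ∧ ∀ x ∈ S, ρ x ≠ x := by
  obtain ⟨m, hm⟩ := heven
  obtain ⟨y, hy⟩ := h.nonempty
  have hm0 : 0 < m := by
    have := Finset.card_pos.2 ⟨y, hy⟩
    rw [h.card_eq] at this
    omega
  obtain ⟨φ, hφ⟩ := exists_point_of_transcendental (transcendental_inv h.transcendental) 0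
  obtain ⟨θ, hθ⟩ := IsAlgClosed.exists_pow_nat_eq (-1 : k) hm0
  obtain ⟨y', hy', hyθ⟩ := h.exists_map_div_eq hg hφ hy (θ := θ) (by
    rw [hm, pow_add, hθ, neg_one_mul, neg_neg])
  obtain ⟨ρ₀, hρ₀, hρ₀T, rfl⟩ := h.exists_isFrobeniusSemilinear p s hgs hy hy'
  obtain ⟨ρ, hρ, hρT, hρy, hφρ⟩ :=
    h.exists_isFrobeniusAt_inv hg' hg p s hφ hρ₀ hρ₀T hy hy'
  refine ⟨ρ, hρ, hρT, fun x hx hxρ => ?_⟩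
  have hy'0 := h.ne_zero_of_mem hy'
  refine ne_pow_mul_of_odd (two_ne_zero_of_odd_expChar k hp) (hp.pow (n := s))
    (hm ▸ h.pow_map_div_eq_one hg hφ hx hy) hθ ?_
  rw [← hyθ, ← hφρ ⟨x / y, _⟩ ⟨x / ρ₀ y, h.div_mem_integralOver_inv hg hx hy'⟩
    (by rw [map_div₀, hxρ, hρy]), ← map_mul]
  refine congrArg φ (Subtype.ext ?_)
  exact (div_mul_div_cancel₀ hy'0).symm

end IsGenericFiber

section Chebotarev

variable {k E : Type*} [Field k] [Field E] [Algebra k E] {T : E}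

theorem exists_finset_mem_iff_pow_eq_self (k : Type*) [Field k] [IsAlgClosed k] (p s : ℕ)
    [Fact p.Prime] [CharP k p] (hs : s ≠ 0) :
    ∃ Z : Finset k, Z.card = p ^ s ∧ ∀ x, x ∈ Z ↔ x ^ p ^ s = x := by
  classical
  have hp : 1 < p := (Fact.out : p.Prime).one_lt
  refine ⟨(X ^ p ^ s - X : k[X]).roots.toFinset, ?_, fun x => ?_⟩
  · rw [Multiset.toFinset_card_of_nodup
        (nodup_roots (galois_poly_separable p _ (dvd_pow_self p hs))),
      ← (IsAlgClosed.splits _).natDegree_eq_card_roots,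
      FiniteField.X_pow_card_pow_sub_X_natDegree_eq k hs hp]
  · rw [Multiset.mem_toFinset, mem_roots (FiniteField.X_pow_card_pow_sub_X_ne_zero k hs hp)]
    simp [sub_eq_zero]

/-- The action of the Galois group of `E` over `k(T)` on the ring of functions integral over
`k[T]`. -/
def galIntegralOver (σ : Gal(E/IntermediateField.adjoin k {T})) :
    integralOver k T →ₐ[k] integralOver k T :=
  ((σ.restrictScalars k : E →ₐ[k] E).comp (integralOver k T).val).codRestrict _ fun b =>
    map_mem_integralOver (isFrobeniusSemilinear_algHom _)
      (σ.commutes (IntermediateField.AdjoinSimple.gen k T)) b.2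

theorem galIntegralOver_self (σ : Gal(E/IntermediateField.adjoin k {T})) :
    galIntegralOver σ ⟨T, mem_integralOver_self T⟩ = ⟨T, mem_integralOver_self T⟩ :=
  Subtype.ext (σ.commutes (IntermediateField.AdjoinSimple.gen k T))

theorem exists_finset_points [IsAlgClosed k] (hT : Transcendental k T)
    [FiniteDimensional (IntermediateField.adjoin k {T}) E] (Z : Finset k)
    (hZ : ∀ ω : integralOver k T →ₐ[k] k, ω ⟨T, mem_integralOver_self T⟩ ∈ Z →
      Function.Injective fun σ : Gal(E/IntermediateField.adjoin k {T}) =>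
        ω.comp (galIntegralOver σ)) :
    ∃ W : Finset (integralOver k T →ₐ[k] k),
      W.card = Z.card * Nat.card Gal(E/IntermediateField.adjoin k {T}) ∧
      ∀ ω ∈ W, ω ⟨T, mem_integralOver_self T⟩ ∈ Z := by
  classical
  choose ω hω using exists_point_of_transcendental hT
  let twist (a : k × Gal(E/IntermediateField.adjoin k {T})) := (ω a.1).comp (galIntegralOver a.2)
  have htwist (a) : twist a ⟨T, mem_integralOver_self T⟩ = a.1 := by
    simp only [twist, AlgHom.comp_apply, galIntegralOver_self, hω]
  refine ⟨(Z ×ˢ Finset.univ).image twist, ?_, ?_⟩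
  · rw [Finset.card_image_of_injOn, Finset.card_product, Finset.card_univ,
      Nat.card_eq_fintype_card]
    rintro ⟨τ, σ⟩ hτ ⟨τ', σ'⟩ - h
    obtain rfl : τ = τ' := by
      have := (htwist (τ, σ)).symm.trans (h ▸ htwist (τ', σ'))
      exact this
    exact Prod.ext rfl (hZ (ω τ) (by rw [hω]; exact (Finset.mem_product.1 hτ).1) h)
  · simp only [Finset.mem_image, Finset.mem_product]
    rintro _ ⟨a, ⟨ha, -⟩, rfl⟩
    rwa [htwist]

theorem mul_card_le_of_mul_card_fiber_le {α β : Type*} [DecidableEq β] {s : Finset α}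
    {t : Finset β} {f : α → β} (hf : ∀ a ∈ s, f a ∈ t) {N m : ℕ}
    (hfiber : ∀ b ∈ t, N * {a ∈ s | f a = b}.card ≤ m) : N * s.card ≤ t.card * m := by
  rw [Finset.card_eq_sum_card_fiberwise hf, Finset.mul_sum, ← smul_eq_mul t.card]
  exact Finset.sum_le_card_nsmul t _ m hfiber

theorem exists_card_isFrobeniusAt_le [IsAlgClosed k] (hT : Transcendental k T)
    [FiniteDimensional (IntermediateField.adjoin k {T}) E] (p : ℕ) [Fact p.Prime] [CharP k p]
    (N : ℕ) : ∃ C s₀, ∀ s ≥ s₀, ∀ ρ : E →+* E, IsFrobeniusSemilinear k (p ^ s) ρ → ρ T = T →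
      ∀ W : Finset (integralOver k T →ₐ[k] k), (∀ ω ∈ W, IsFrobeniusAt (p ^ s) ρ ω) →
        N * W.card ≤ (N + 1) * p ^ s + C := by
  have hp : 1 < p := (Fact.out : p.Prime).one_lt
  have : ExpChar E p := expChar_of_injective_algebraMap (algebraMap k E).injective p
  have : ExpChar (integralOver k T) p :=
    expChar_of_injective_algebraMap (algebraMap k (integralOver k T)).injective p
  obtain ⟨c, hL⟩ := exists_isPoleFiltration_poleSpace hT
  obtain ⟨C, s₀, h⟩ := hL.exists_card_le hp
    ((hasPerfectCore_of_transcendental hT hp).isEventuallyFrobeniusIndependent.subalgebra _) N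
  exact ⟨C, s₀, fun s hs ρ hρ hρT W hW =>
    h s hs (fun b => ⟨ρ b, map_mem_integralOver hρ hρT b.2⟩)
      (fun v a ha => map_mem_poleSpace hρ hρT rfl ha) W fun ω hω a => hW ω hω _ _ rfl⟩

theorem exists_isFrobeniusAt_comp_gal (hT : Transcendental k T)
    [FiniteDimensional (IntermediateField.adjoin k {T}) E]
    [IsGalois (IntermediateField.adjoin k {T}) E] (p s : ℕ) [ExpChar k p] [PerfectRing k p]
    {ρ : E →+* E} (hρ : IsFrobeniusSemilinear k (p ^ s) ρ) (hρT : ρ T = T)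
    {ω : integralOver k T →ₐ[k] k} (hω : ω ⟨T, mem_integralOver_self T⟩ ^ p ^ s =
      ω ⟨T, mem_integralOver_self T⟩) :
    ∃ σ : Gal(E/IntermediateField.adjoin k {T}),
      IsFrobeniusAt (p ^ s) (ρ.comp (σ : E →+* E)) ω := by
  refine exists_isFrobeniusAt p s (u := ⟨T, mem_integralOver_self T⟩) hT
    (fun σ b hb => (galIntegralOver σ ⟨b, hb⟩).2) hρ
    (fun b hb => map_mem_integralOver hρ hρT hb) ω ?_
  rw [hω]
  exact congrArg ω (Subtype.ext hρT)

theorem le_of_mul_mul_le_pred_mul {N q z δ C : ℕ} (hN : 0 < N) (hz : q ≤ z + δ)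
    (h : N * (z * N) ≤ (N - 1) * ((N + 1) * q + C)) : q ≤ N * C + N * N * δ := by
  obtain ⟨n, rfl⟩ : ∃ n, N = n + 1 := ⟨N - 1, by omega⟩
  rw [Nat.add_sub_cancel] at h
  nlinarith [Nat.mul_le_mul_left ((n + 1) * (n + 1)) hz]

theorem exists_isFrobeniusAt_of_large [IsAlgClosed k] (hT : Transcendental k T)
    [FiniteDimensional (IntermediateField.adjoin k {T}) E]
    [IsGalois (IntermediateField.adjoin k {T}) E] (p : ℕ) [Fact p.Prime] [CharP k p]
    (Δ : Finset k) (hΔ : ∀ ω : integralOver k T →ₐ[k] k, ω ⟨T, mem_integralOver_self T⟩ ∉ Δ →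
      Function.Injective fun σ : Gal(E/IntermediateField.adjoin k {T}) =>
        ω.comp (galIntegralOver σ)) :
    ∃ s₀, ∀ s ≥ s₀, ∀ ρ : E →+* E, IsFrobeniusSemilinear k (p ^ s) ρ → ρ T = T →
      ∃ ω : integralOver k T →ₐ[k] k, ω ⟨T, mem_integralOver_self T⟩ ∉ Δ ∧
        IsFrobeniusAt (p ^ s) ρ ω := by
  classical
  set N := Nat.card Gal(E/IntermediateField.adjoin k {T}) with hN
  obtain ⟨C, s₀, hC⟩ := exists_card_isFrobeniusAt_le hT p N
  have hp : 1 < p := (Fact.out : p.Prime).one_lt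
  refine ⟨max s₀ (N * C + N * N * Δ.card + 1), fun s hs ρ hρ hρT => ?_⟩
  have hQ : N * C + N * N * Δ.card < p ^ s :=
    (Nat.lt_of_succ_le (le_of_max_le_right hs)).trans (Nat.lt_pow_self hp)
  obtain ⟨Z, hZcard, hZ⟩ := exists_finset_mem_iff_pow_eq_self k p s (by omega)
  obtain ⟨W, hWcard, hW⟩ := exists_finset_points hT (Z \ Δ) fun ω hω =>
    hΔ ω (Finset.mem_sdiff.1 hω).2
  have hfrob (ω) (hω : ω ∈ W) := exists_isFrobeniusAt_comp_gal hT p s hρ hρT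
    ((hZ _).1 (Finset.mem_sdiff.1 (hW ω hω)).1)
  by_contra! hne
  choose! σ hσ using hfrob
  have hσ1 (ω) (hω : ω ∈ W) : σ ω ∈ Finset.univ.erase 1 := by
    refine Finset.mem_erase.2 ⟨fun h1 => hne ω (Finset.mem_sdiff.1 (hW ω hω)).2 ?_,
      Finset.mem_univ _⟩
    have := hσ ω hω
    rwa [h1] at this
  have hle := mul_card_le_of_mul_card_fiber_le hσ1 fun τ _ =>
    hC s (le_of_max_le_left hs) (ρ.comp (τ : E →+* E))
      (hρ.comp_algHom ((τ : E →ₐ[IntermediateField.adjoin k {T}] E).restrictScalars k))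
      ((congrArg ρ (τ.commutes (IntermediateField.AdjoinSimple.gen k T))).trans hρT) _
      fun ω hω => by
        obtain ⟨hωW, rfl⟩ := Finset.mem_filter.1 hω
        exact hσ ω hωW
  rw [Finset.card_erase_of_mem (Finset.mem_univ _), Finset.card_univ, ← Nat.card_eq_fintype_card,
    ← hN, hWcard] at hle
  exact hQ.not_ge (le_of_mul_mul_le_pred_mul Nat.card_pos
    (hZcard ▸ Nat.sub_le_iff_le_add.1 (Finset.le_card_sdiff Δ Z)) hle)

end Chebotarev

/-- The polynomial `g` has coefficients in `F_Q` and permutes it. Here `Q` is a power of the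
characteristic, `F_Q` is the set of solutions of `x ^ Q = x`, and, this set being finite, only
surjectivity is asked for. -/
def IsPermutationOver {k : Type*} [Field k] (Q : ℕ) (g : k[X]) : Prop :=
  (∀ i, g.coeff i ^ Q = g.coeff i) ∧
    Set.SurjOn (fun x => g.eval x) {x | x ^ Q = x} {x | x ^ Q = x}

namespace IsGenericFiber

variable {k E : Type*} [Field k] [Field E] [Algebra k E] {g : k[X]} {T : E} {S : Finset E}

theorem sub_C_map_eq (h : IsGenericFiber g T S) (ω : integralOver k T →ₐ[k] k) :
    g - C (ω ⟨T, mem_integralOver_self T⟩) =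
      C g.leadingCoeff * ∏ x : S, (X - C (ω ⟨x, h.mem_integralOver x.2⟩)) := by
  have hB : g.map (algebraMap k (integralOver k T)) - C ⟨T, mem_integralOver_self T⟩ =
      C (algebraMap k _ g.leadingCoeff) *
        ∏ x : S, (X - C (⟨x, h.mem_integralOver x.2⟩ : integralOver k T)) := by
    refine map_injective ((integralOver k T).val : integralOver k T →+* E)
      Subtype.val_injective ?_
    have hE := h.map_sub_C_eq
    rw [← Finset.prod_coe_sort] at hE
    simp only [Polynomial.map_mul, Polynomial.map_prod, Polynomial.map_sub, map_C, map_X,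
      AlgHom.coe_toRingHom, AlgHom.commutes, Polynomial.map_map, AlgHom.comp_algebraMap]
    exact hE
  have hk := congrArg (Polynomial.map (ω : integralOver k T →+* k)) hB
  simpa only [Polynomial.map_mul, Polynomial.map_prod, Polynomial.map_sub, map_C, map_X,
    AlgHom.coe_toRingHom, AlgHom.commutes, Polynomial.map_map, AlgHom.comp_algebraMap,
    Algebra.algebraMap_self, Polynomial.map_id, RingHom.id_apply] using hk

theorem eq_of_map_eq [IsAlgClosed k] (h : IsGenericFiber g T S)
    {ω : integralOver k T →ₐ[k] k}
    (hω : ∀ c, (derivative g).eval c = 0 → g.eval c ≠ ω ⟨T, mem_integralOver_self T⟩) {x y : E}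
    (hx : x ∈ S) (hy : y ∈ S)
    (hxy : ω ⟨x, h.mem_integralOver hx⟩ = ω ⟨y, h.mem_integralOver hy⟩) : x = y := by
  have hsep : (g - C (ω ⟨T, mem_integralOver_self T⟩)).Separable :=
    separable_sub_C_of_forall_aeval_ne k (by simpa [aeval_def] using hω)
  rw [h.sub_C_map_eq ω] at hsep
  exact congrArg Subtype.val
    (hsep.of_mul_right.injective_of_prod_X_sub_C (a₁ := ⟨x, hx⟩) (a₂ := ⟨y, hy⟩) hxy)

theorem exists_fixed_mem_of_isPermutationOver [IsAlgClosed k] (h : IsGenericFiber g T S)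
    (hg : derivative g ≠ 0) (p : ℕ) [Fact p.Prime] [CharP k p] :
    ∃ s₀, ∀ s ≥ s₀, IsPermutationOver (p ^ s) g →
      ∀ ρ : E →+* E, IsFrobeniusSemilinear k (p ^ s) ρ → ρ T = T → ∃ x ∈ S, ρ x = x := by
  classical
  let T' : IntermediateField.adjoin k {T} := IntermediateField.AdjoinSimple.gen k T
  have hfib : IsGenericFiber g (T' : E) S := h
  have := hfib.finiteDimensional
  have := hfib.isGalois hg
  let Δ := (derivative g).roots.toFinset.image fun c => g.eval c
  have hΔ (t : k) (ht : t ∉ Δ) (c : k) (hc : (derivative g).eval c = 0) : g.eval c ≠ t :=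
    fun hct => ht (Finset.mem_image.2 ⟨c, by simpa [hg] using hc, hct⟩)
  have hmem (σ : Gal(E/IntermediateField.adjoin k {T})) {x : E} (hx : x ∈ S) : σ x ∈ S :=
    h.map_mem (by simp) (isFrobeniusSemilinear_algHom (σ.restrictScalars k : E →ₐ[k] E))
      (σ.commutes T') hx
  obtain ⟨s₀, hs₀⟩ := exists_isFrobeniusAt_of_large h.transcendental p Δ
    fun ω hω σ σ' hσ => h.gal_ext fun x hx => h.eq_of_map_eq (hΔ _ hω) (hmem σ hx) (hmem σ' hx)
      (DFunLike.congr_fun hσ ⟨x, h.mem_integralOver hx⟩)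
  refine ⟨s₀, fun s hs ⟨hgs, hsurj⟩ ρ hρ hρT => ?_⟩
  obtain ⟨ω, hω, hωρ⟩ := hs₀ s hs ρ hρ hρT
  have hτ : ω ⟨T, mem_integralOver_self T⟩ ^ p ^ s = ω ⟨T, mem_integralOver_self T⟩ :=
    (hωρ _ _ hρT.symm).symm
  obtain ⟨ξ, hξ, hgξ⟩ := hsurj hτ
  have hprod := congrArg (eval ξ) (h.sub_C_map_eq ω)
  rw [eval_sub, eval_C, sub_eq_zero.2 hgξ, eval_mul, eval_C, eval_prod] at hprod
  obtain ⟨x, -, hx⟩ := Finset.prod_eq_zero_iff.1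
    ((mul_eq_zero.1 hprod.symm).resolve_left h.leadingCoeff_ne_zero)
  rw [eval_sub, eval_X, eval_C, sub_eq_zero] at hx
  have hρx : ρ x ∈ S := h.map_mem hgs hρ hρT x.2
  refine ⟨x, x.2, h.eq_of_map_eq (hΔ _ hω) hρx x.2 ?_⟩
  rw [hωρ ⟨x, h.mem_integralOver x.2⟩ ⟨ρ x, h.mem_integralOver hρx⟩ rfl, ← hx]
  exact hξ

end IsGenericFiber

namespace IsPermutationOver

variable {k : Type u} [Field k] {p s : ℕ} {g : k[X]}

theorem sub_C_coeff_zero [ExpChar k p] (h : IsPermutationOver (p ^ s) g) :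
    IsPermutationOver (p ^ s) (g - C (g.coeff 0)) := by
  refine ⟨fun i => ?_, fun y (hy : y ^ p ^ s = y) => ?_⟩
  · have hC : (C (g.coeff 0)).coeff i ^ p ^ s = (C (g.coeff 0)).coeff i := by
      rcases eq_or_ne i 0 with rfl | hi
      · rw [coeff_C_zero, h.1]
      · rw [coeff_C_of_ne_zero hi, zero_pow (expChar_pow_pos k p s).ne']
    rw [coeff_sub, sub_pow_expChar_pow, h.1, hC]
  · obtain ⟨x, hx, hxy⟩ := h.2 (show (y + g.coeff 0) ^ p ^ s = y + g.coeff 0 by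
      rw [add_pow_expChar_pow, hy, h.1])
    exact ⟨x, hx, by simpa using sub_eq_of_eq_add hxy⟩

theorem of_pow [ExpChar k p] (h : IsPermutationOver (p ^ s) (g ^ p)) :
    IsPermutationOver (p ^ s) g := by
  have hinj : Function.Injective fun x : k => x ^ p := frobenius_inj k p
  refine ⟨fun i => hinj ?_, fun y (hy : y ^ p ^ s = y) => ?_⟩
  · have hi := h.1 (i * p)
    rw [← map_frobenius_expand, coeff_map, coeff_expand_mul (expChar_pos k p)] at hi
    exact (pow_right_comm _ _ _).trans hi
  · obtain ⟨x, hx, hxy⟩ := h.2 (show (y ^ p) ^ p ^ s = y ^ p by rw [pow_right_comm, hy])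
    exact ⟨x, hx, hinj ((eval_pow p).symm.trans hxy)⟩

theorem natDegree_ne_zero {Q : ℕ} (h : IsPermutationOver Q g) (hQ : Q ≠ 0) :
    g.natDegree ≠ 0 := by
  intro h0
  rw [eq_C_of_natDegree_eq_zero h0] at h
  obtain ⟨x, -, hx⟩ := h.2 (zero_pow hQ)
  obtain ⟨y, -, hy⟩ := h.2 (one_pow Q)
  refine zero_ne_one (α := k) (hx.symm.trans (Eq.trans ?_ hy))
  simp only [eval_C]

end IsPermutationOver

theorem odd_natDegree_of_derivative_ne_zero {k : Type u} [Field k] [IsAlgClosed k] {p : ℕ}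
    [Fact p.Prime] [CharP k p] (hp : Odd p) {g : k[X]} (hg' : derivative g ≠ 0)
    (h : ∃ᶠ s in Filter.atTop, IsPermutationOver (p ^ s) g) : Odd g.natDegree := by
  by_contra heven
  let g₀ := g - C (g.coeff 0)
  have hg₀' : derivative g₀ ≠ 0 := by simpa [g₀] using hg'
  obtain ⟨E, _, _, T, S, hS⟩ := exists_isGenericFiber hg₀'
  obtain ⟨s₀, hs₀⟩ := hS.exists_fixed_mem_of_isPermutationOver hg₀' p
  obtain ⟨s, hs, hperm⟩ := Filter.frequently_atTop.1 h s₀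
  obtain ⟨ρ, hρ, hρT, hne⟩ := hS.exists_isFrobeniusSemilinear_forall_ne hg₀' (by simp [g₀])
    (by simpa [g₀] using heven) p s hp hperm.sub_C_coeff_zero.1
  obtain ⟨x, hx, hρx⟩ := hs₀ s hs hperm.sub_C_coeff_zero ρ hρ hρT
  exact hne x hx hρx

theorem exists_pow_eq_of_derivative_eq_zero {k : Type*} [Field k] (p : ℕ) [Fact p.Prime]
    [CharP k p] [PerfectRing k p] {g : k[X]} (hg : derivative g = 0) : ∃ h : k[X], h ^ p = g :=
  ⟨_, (polynomial_expand_eq k p _).symm.trans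
    (expand_contract p hg (Fact.out : p.Prime).ne_zero)⟩

theorem odd_natDegree_of_frequently_isPermutationOver {k : Type u} [Field k] [IsAlgClosed k]
    {p : ℕ} [Fact p.Prime] [CharP k p] (hp : Odd p) {g : k[X]}
    (h : ∃ᶠ s in Filter.atTop, IsPermutationOver (p ^ s) g) : Odd g.natDegree := by
  induction hd : g.natDegree using Nat.strong_induction_on generalizing g with
  | _ d ih =>
    subst hd
    by_cases hg' : derivative g = 0
    · obtain ⟨g, rfl⟩ := exists_pow_eq_of_derivative_eq_zero p hg'
      have hroot := h.mono fun s hs => hs.of_pow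
      obtain ⟨s, hs⟩ := hroot.exists
      have hlt : g.natDegree < (g ^ p).natDegree := by
        rw [natDegree_pow]
        exact lt_mul_left (hs.natDegree_ne_zero (expChar_pow_pos k p s).ne').bot_lt
          (Fact.out : p.Prime).one_lt
      rw [natDegree_pow]
      exact hp.mul (ih _ hlt hroot rfl)
    · exact odd_natDegree_of_derivative_ne_zero hp hg' h

theorem pow_card_eq_self_iff_mem_range {L k : Type*} [Field L] [Fintype L] [Field k]
    (φ : L →+* k) {x : k} : x ^ Fintype.card L = x ↔ x ∈ Set.range φ := by
  refine ⟨fun hx => ?_, ?_⟩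
  · have hsplits : (X ^ Fintype.card L - X : L[X]).Splits := by
      rw [splits_iff_card_roots, FiniteField.roots_X_pow_card_sub_X,
        FiniteField.X_pow_card_sub_X_natDegree_eq L Fintype.one_lt_card]
      rfl
    have hroot : x ∈ ((X ^ Fintype.card L - X : L[X]).map φ).roots := by
      rw [mem_roots_map (FiniteField.X_pow_card_sub_X_ne_zero L Fintype.one_lt_card)]
      simp [hx]
    rw [hsplits.roots_map, Multiset.mem_map] at hroot
    obtain ⟨y, -, hy⟩ := hroot
    exact ⟨y, hy⟩
  · rintro ⟨y, rfl⟩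
    rw [← map_pow, FiniteField.pow_card]

theorem isPermutationOver_map {K L k : Type*} [Field K] [Field L] [Fintype L] [Field k]
    [Algebra K L] [Algebra K k] (φ : L →ₐ[K] k) {g : K[X]}
    (hg : Function.Surjective fun x : L => aeval x g) :
    IsPermutationOver (Fintype.card L) (g.map (algebraMap K k)) := by
  have hφ (x : k) : x ^ Fintype.card L = x ↔ x ∈ Set.range φ :=
    pow_card_eq_self_iff_mem_range (φ : L →+* k)
  refine ⟨fun i => ?_, fun y hy => ?_⟩
  · rw [coeff_map, hφ]
    exact ⟨algebraMap K L (g.coeff i), φ.commutes _⟩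
  · obtain ⟨z, rfl⟩ := (hφ y).1 hy
    obtain ⟨x, rfl⟩ := hg z
    exact ⟨φ x, (hφ _).2 ⟨x, rfl⟩, by
      simpa only [eval_map_algebraMap] using aeval_algHom_apply φ x g⟩

theorem natDegree_taylor_sub_self {R : Type*} [CommRing R] [IsDomain R] {f : R[X]} {r : R}
    (hr : r ≠ 0) (hf : (f.natDegree : R) ≠ 0) :
    (taylor r f - f).natDegree = f.natDegree - 1 := by
  obtain ⟨m, hm⟩ : ∃ m, f.natDegree = m + 1 :=
    Nat.exists_eq_succ_of_ne_zero fun h0 => hf (by rw [h0, Nat.cast_zero])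
  have hlead : f.coeff (m + 1) ≠ 0 := by
    rw [← hm]
    exact leadingCoeff_ne_zero.2 fun h0 => hf (by rw [h0, natDegree_zero, Nat.cast_zero])
  have hle : (hasseDeriv m f).natDegree ≤ 1 := (natDegree_hasseDeriv_le f m).trans (by omega)
  rw [hm, Nat.add_sub_cancel]
  refine natDegree_eq_of_le_of_coeff_ne_zero (natDegree_le_iff_coeff_eq_zero.2 fun i hi => ?_) ?_
  · rcases (Nat.succ_le_of_lt hi).eq_or_lt with rfl | hi
    · rw [coeff_sub, sub_eq_zero, Nat.succ_eq_add_one, ← hm, coeff_taylor_natDegree]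
      rfl
    · rw [coeff_sub, coeff_eq_zero_of_natDegree_lt (by rw [natDegree_taylor]; omega),
        coeff_eq_zero_of_natDegree_lt (by omega), sub_zero]
  · rw [coeff_sub, taylor_coeff, eq_X_add_C_of_natDegree_le_one hle, hasseDeriv_coeff,
      hasseDeriv_coeff]
    rw [hm] at hf
    simpa [add_comm 1 m, hlead, hr] using hf

theorem IsExceptionalPlanarOdd.frequently_isPermutationOver {K : Type} [Field K] [Fintype K]
    {f : K[X]} (hf : IsExceptionalPlanarOdd f) (k : Type*) [Field k] [IsAlgClosed k] [Algebra K k] :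
    ∃ᶠ r in Filter.atTop,
      IsPermutationOver (Fintype.card K ^ r) ((taylor 1 f - f).map (algebraMap K k)) := by
  obtain ⟨p, _⟩ := CharP.exists K
  have : Fact p.Prime := ⟨CharP.char_is_prime K p⟩
  refine (Nat.frequently_atTop_iff_infinite.2 hf).mono fun r ⟨hr, hplanar⟩ => ?_
  have : NeZero r := ⟨hr.ne'⟩
  have := Fintype.ofFinite (FiniteField.Extension K p r)
  have hcard : Fintype.card (FiniteField.Extension K p r) = Fintype.card K ^ r := by
    simpa only [Nat.card_eq_fintype_card] using FiniteField.natCard_extension K p r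
  rw [← hcard]
  refine isPermutationOver_map (IsAlgClosed.lift : FiniteField.Extension K p r →ₐ[K] k) ?_
  simpa [taylor_apply, aeval_comp] using (hplanar _ hcard 1 one_ne_zero).surjective

theorem exceptional_planar_deg_coprime_p_even
    (p n d : ℕ) (hp : p.Prime) (hodd : Odd p) (hn : 0 < n)
    (K : Type) [Field K] [Fintype K] (hK : Fintype.card K = p ^ n)
    (f : K[X]) (hdeg : f.natDegree = d) (hpd : ¬ p ∣ d)
    (hexc : IsExceptionalPlanarOdd f) :
    Even d := by
  have : Fact p.Prime := ⟨hp⟩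
  have : CharP K p := charP_of_card_eq_prime_pow hK
  have : CharP (AlgebraicClosure K) p := charP_of_injective_algebraMap' K p
  have hfreq : ∃ᶠ s in Filter.atTop,
      IsPermutationOver (p ^ s) ((taylor 1 f - f).map (algebraMap K (AlgebraicClosure K))) :=
    (Filter.tendsto_id.const_mul_atTop' hn).frequently <|
      (hexc.frequently_isPermutationOver (AlgebraicClosure K)).mono fun r hr => by
        rwa [hK, ← pow_mul] at hr
  have hfd : (f.natDegree : K) ≠ 0 := by rwa [hdeg, Ne, CharP.cast_eq_zero_iff K p]
  have hd := odd_natDegree_of_frequently_isPermutationOver hodd hfreq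
  rw [natDegree_map, natDegree_taylor_sub_self one_ne_zero hfd, hdeg] at hd
  obtain ⟨m, hm⟩ := hd
  exact ⟨m + 1, by omega⟩
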